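/- arXiv:math/0509720 — 2 statements merged into one kernel-verified Lean document; each statement's English description precedes it below -/
import Mathlib

section
/- Let $n\ge 1$ and $W=W^{n+1,n}=\{(x,y)\in\mathbb R^{n+1}\times\mathbb R^n : x_1\le y_1\le x_2\le\dots\le y_n\le x_{n+1}\}$. For $t>0$ let $\varphi_t(y)=(2\pi t)^{-1/2}e^{-y^2/(2t)}$, $\Phi_t(y)=\int_{-\infty}^y\varphi_t(z)\,dz$, $\varphi_t'(y)=-y(2\pi t^3)^{-1/2}e^{-y^2/(2t)}$, and let $q^n_t((x,y),(x',y'))$ be the determinant of the $(2n+1)\times(2n+1)$ block matrix $\begin{pmatrix}A&B\\ C&D\end{pmatrix}$ with entries $A_{ij}=\varphi_t(x'_j-x_i)$ $(1\le i,j\le n+1)$, $B_{ij}=\Phi_t(y'_j-x_i)-\mathbf 1\{j\ge i\}$ $(1\le i\le n+1,\ 1\le j\le n)$, $C_{ij}=\varphi'_t(x'_j-y_i)$ $(1\le i\le n,\ 1\le j\le n+1)$, $D_{ij}=\varphi_t(y'_j-y_i)$ $(1\le i,j\le n)$. Let $f:W\to\mathbb R$ be bounded and continuous, and zero on a neighbourhood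 of the boundary of $W$. Then for all $t>0$ and $w\in W$ the integral $\int_W q^n_t(w,w')f(w')\,dw'$ converges absolutely, and as $t\downarrow 0$ it converges to $f(w)$, uniformly over $w$ in each compact subset of $W$. If, moreover, $f$ is uniformly continuous, then the convergence is uniform over all of $W$, that is, $$\sup_{w\in W}\Bigl|\int_W q^n_t(w,w')f(w')\,dw'-f(w)\Bigr|\to 0\qquad\text{as } t\downarrow 0 .$$ -/
/-- The centered Gaussian density `φ_t` with variance `t`. -/
noncomputable def gauss (t y : ℝ) : ℝ :=
  (Real.sqrt (2 * Real.pi * t))⁻¹ * Real.exp (-y ^ 2 / (2 * t))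

/-- The Gaussian cumulative distribution function `Φ_t`. -/
noncomputable def gaussCDF (t y : ℝ) : ℝ := ∫ z in Set.Iic y, gauss t z

/-- The derivative `φ'_t` of the Gaussian density. -/
noncomputable def gaussDeriv (t y : ℝ) : ℝ :=
  -y / Real.sqrt (2 * Real.pi * t ^ 3) * Real.exp (-y ^ 2 / (2 * t))

/-- The kernel `q^n_t(w, w')` with `w = (x, y)` and `w' = (x', y')`, a `(2n+1)×(2n+1)` block
determinant. -/
noncomputable def qKer (n : ℕ) (t : ℝ) (w w' : (Fin (n + 1) → ℝ) × (Fin n → ℝ)) : ℝ :=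
  Matrix.det (Matrix.fromBlocks
    (Matrix.of fun i j : Fin (n + 1) => gauss t (w'.1 j - w.1 i))
    (Matrix.of fun (i : Fin (n + 1)) (j : Fin n) =>
      gaussCDF t (w'.2 j - w.1 i) - (if (i : ℕ) ≤ (j : ℕ) then (1 : ℝ) else 0))
    (Matrix.of fun (i : Fin n) (j : Fin (n + 1)) => gaussDeriv t (w'.1 j - w.2 i))
    (Matrix.of fun i j : Fin n => gauss t (w'.2 j - w.2 i)))

/-- The interlacing region `W^{n+1,n}`. -/
def Wint (n : ℕ) : Set ((Fin (n + 1) → ℝ) × (Fin n → ℝ)) :=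
  {w | ∀ i : Fin n, w.1 i.castSucc ≤ w.2 i ∧ w.2 i ≤ w.1 i.succ}

open MeasureTheory Set

/-- The position of a coordinate in the interlacing order `x₁, y₁, x₂, …, yₙ, xₙ₊₁`. -/
def interPos (n : ℕ) : Fin (n + 1) ⊕ Fin n → ℕ :=
  Sum.elim (fun i => 2 * (i : ℕ)) (fun i => 2 * (i : ℕ) + 1)

/-- All coordinates of a point `(x, y)` as one family. -/
def interVal {n : ℕ} (w : (Fin (n + 1) → ℝ) × (Fin n → ℝ)) : Fin (n + 1) ⊕ Fin n → ℝ :=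
  Sum.elim w.1 w.2

/-- The point with a given family of coordinates. -/
def interPoint {n : ℕ} (u : Fin (n + 1) ⊕ Fin n → ℝ) : (Fin (n + 1) → ℝ) × (Fin n → ℝ) :=
  (fun i => u (Sum.inl i), fun i => u (Sum.inr i))

theorem interVal_interPoint {n : ℕ} (u : Fin (n + 1) ⊕ Fin n → ℝ) :
    interVal (interPoint u) = u := by
  ext a; cases a <;> rfl

theorem interPoint_interVal {n : ℕ} (w : (Fin (n + 1) → ℝ) × (Fin n → ℝ)) :
    interPoint (interVal w) = w := rfl

theorem interPos_injective (n : ℕ) : Function.Injective (interPos n) := by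
  rintro (i | i) (j | j) h <;> simp only [interPos, Sum.elim_inl, Sum.elim_inr] at h
  · congr 1; ext; omega
  · omega
  · omega
  · congr 1; ext; omega

theorem interVal_mono {n : ℕ} {w : (Fin (n + 1) → ℝ) × (Fin n → ℝ)} (hw : w ∈ Wint n)
    {a b : Fin (n + 1) ⊕ Fin n} (h : interPos n a ≤ interPos n b) :
    interVal w a ≤ interVal w b := by
  have hx : Monotone w.1 := Fin.monotone_iff_le_succ.2 fun i => (hw i).1.trans (hw i).2
  rcases a with i | i <;> rcases b with j | j <;>
    simp only [interPos, interVal, Sum.elim_inl, Sum.elim_inr] at h ⊢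
  · exact hx (Fin.le_def.2 (by omega))
  · exact (hx (Fin.le_def.2 (by simp; omega))).trans (hw j).1
  · exact (hw i).2.trans (hx (Fin.le_def.2 (by simp; omega)))
  · rcases eq_or_lt_of_le (show (i : ℕ) ≤ j by omega) with e | e
    · rw [Fin.ext e]
    · exact ((hw i).2.trans (hx (Fin.le_def.2 (by simp; omega)))).trans (hw j).1

theorem mem_Wint_iff {n : ℕ} {w : (Fin (n + 1) → ℝ) × (Fin n → ℝ)} :
    w ∈ Wint n ↔ ∀ a b, interPos n a ≤ interPos n b → interVal w a ≤ interVal w b := by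
  refine ⟨fun hw a b h => interVal_mono hw h, fun h i => ⟨?_, ?_⟩⟩
  · exact h (Sum.inl i.castSucc) (Sum.inr i) (by simp [interPos])
  · exact h (Sum.inr i) (Sum.inl i.succ) (by simp [interPos])

theorem continuous_interPoint {n : ℕ} :
    Continuous (interPoint : (Fin (n + 1) ⊕ Fin n → ℝ) → _) := by
  unfold interPoint; fun_prop

theorem isClosed_Wint (n : ℕ) : IsClosed (Wint n) := by
  have : Wint n = ⋂ i : Fin n, {w | w.1 i.castSucc ≤ w.2 i} ∩ {w | w.2 i ≤ w.1 i.succ} := by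
    ext w; simp [Wint]
  rw [this]
  exact isClosed_iInter fun i => (isClosed_le (by fun_prop) (by fun_prop)).inter
    (isClosed_le (by fun_prop) (by fun_prop))

theorem dist_lt_of_interVal {n : ℕ} {w w' : (Fin (n + 1) → ℝ) × (Fin n → ℝ)} {δ : ℝ}
    (hδ : 0 < δ) (h : ∀ a, |interVal w a - interVal w' a| < δ) : dist w w' < δ := by
  rw [Prod.dist_eq, max_lt_iff, dist_pi_lt_iff hδ, dist_pi_lt_iff hδ]
  exact ⟨fun i => h (Sum.inl i), fun i => h (Sum.inr i)⟩

/-- A point of `Wint n` with two equal coordinates lies on the boundary. -/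
theorem mem_frontier_Wint {n : ℕ} {w : (Fin (n + 1) → ℝ) × (Fin n → ℝ)} (hw : w ∈ Wint n)
    {a b : Fin (n + 1) ⊕ Fin n} (hab : interPos n a < interPos n b)
    (h : interVal w a = interVal w b) : w ∈ frontier (Wint n) := by
  refine ⟨subset_closure hw, fun hi => ?_⟩
  have hc : Continuous fun s : ℝ => interPoint (interVal w + s • Pi.single a (1 : ℝ)) :=
    continuous_interPoint.comp (by fun_prop)
  have h0 : interPoint (interVal w + (0 : ℝ) • Pi.single a (1 : ℝ)) ∈ interior (Wint n) := by
    simpa [interPoint_interVal] using hi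
  have hev := (hc.tendsto 0).eventually (isOpen_interior.mem_nhds h0)
  obtain ⟨ε, hε, hball⟩ := Metric.eventually_nhds_iff.1 hev
  have hm := interior_subset (hball (y := ε / 2) (by
    rw [Real.dist_eq, sub_zero, abs_of_pos (by positivity)]; linarith))
  have := interVal_mono hm hab.le
  have hne : b ≠ a := by rintro rfl; exact lt_irrefl _ hab
  rw [interVal_interPoint] at this
  simp [hne] at this
  linarith

/-- A point of `Wint n` with two close coordinates is close to a point of `Wint n` where these
coordinates agree. -/
theorem exists_frontier_near {n : ℕ} {w : (Fin (n + 1) → ℝ) × (Fin n → ℝ)} (hw : w ∈ Wint n)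
    {a b : Fin (n + 1) ⊕ Fin n} (hab : interPos n a < interPos n b) {δ : ℝ}
    (h : interVal w b - interVal w a < δ) :
    ∃ p ∈ Wint n, p ∈ frontier (Wint n) ∧ dist p w < δ ∧
      ∀ c, ∃ d, interVal p c = interVal w d := by
  have hm := @interVal_mono n w hw
  have hδ : 0 < δ := by linarith [hm hab.le]
  let u : Fin (n + 1) ⊕ Fin n → ℝ := fun c =>
    if interPos n a ≤ interPos n c then max (interVal w c) (interVal w b) else interVal w c
  have hu : interPoint u ∈ Wint n := by
    rw [mem_Wint_iff, interVal_interPoint]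
    intro c d hcd
    simp only [u]
    have := hm hcd
    split_ifs with h1 h2 h2
    · exact max_le_max this le_rfl
    · omega
    · exact this.trans (le_max_left _ _)
    · exact this
  refine ⟨interPoint u, hu, mem_frontier_Wint hu hab ?_, dist_lt_of_interVal hδ fun c => ?_,
    fun c => ?_⟩
  · rw [interVal_interPoint]
    simp only [u, le_refl, if_true, hab.le, max_self, max_eq_right (hm hab.le)]
  · rw [interVal_interPoint]
    simp only [u]
    split_ifs with h1
    · have h2 := hm h1
      rcases max_cases (interVal w c) (interVal w b) with ⟨e, h3⟩ | ⟨e, h3⟩ <;> rw [e, abs_lt] <;>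
        constructor <;> linarith
    · simpa using hδ
  · rw [interVal_interPoint]
    simp only [u]
    split_ifs with h1
    · rcases max_choice (interVal w c) (interVal w b) with e | e <;> rw [e]
      exacts [⟨c, rfl⟩, ⟨b, rfl⟩]
    · exact ⟨c, rfl⟩

section Permutations

variable {ι : Type*} [Fintype ι] {p : ι → ℕ}

theorem Equiv.Perm.exists_le_and_le_apply (σ : Equiv.Perm ι) (p : ι → ℕ) (r : ι) :
    ∃ b, p b ≤ p r ∧ p r ≤ p (σ b) := by
  classical
  by_contra! h
  have h1 : (Finset.univ.filter fun b => p b ≤ p r).card ≤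
      (Finset.univ.filter fun b => p b < p r).card := by
    refine Finset.card_le_card_of_injOn σ (fun b hb => ?_) σ.injective.injOn
    simpa using h b (by simpa using hb)
  refine absurd h1 (not_le.2 (Finset.card_lt_card (Finset.ssubset_iff.2 ⟨r, by simp, ?_⟩)))
  intro b hb
  simp only [Finset.mem_insert, Finset.mem_filter, Finset.mem_univ, true_and] at hb ⊢
  rcases hb with rfl | hb
  exacts [le_rfl, hb.le]

theorem Equiv.Perm.exists_inversion (hp : Function.Injective p) {σ : Equiv.Perm ι} (hσ : σ ≠ 1) :
    ∃ a b, p a < p b ∧ p (σ b) < p (σ a) := by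
  classical
  obtain ⟨r, hr⟩ : ∃ r, σ r ≠ r := by
    by_contra! h; exact hσ (Equiv.ext h)
  obtain ⟨a, ha, hmin⟩ := Finset.exists_min_image (Finset.univ.filter fun a => σ a ≠ a) p
    ⟨r, by simpa using hr⟩
  simp only [Finset.mem_filter, Finset.mem_univ, true_and] at ha hmin
  have hne : σ.symm a ≠ a := fun h => ha ((σ.symm_apply_eq.1 h).symm)
  refine ⟨a, σ.symm a, lt_of_le_of_ne (hmin _ ?_) fun h => hne (hp h).symm, ?_⟩
  · rw [Equiv.apply_symm_apply]; exact hne.symm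
  · rw [Equiv.apply_symm_apply]
    exact lt_of_le_of_ne (hmin _ fun h => ha (σ.injective h)) fun h => ha (hp h).symm

/-- The pair formed by the coordinate `r` of `v` and the coordinate `c` of `v'` is inverted if
their order by position is opposite to that by value. -/
def InvertedPair (p : ι → ℕ) (v v' : ι → ℝ) (r c : ι) : Prop :=
  (p r < p c ∧ v' c < v r) ∨ (p c < p r ∧ v r < v' c)

/-- Matching two monotone families by a permutation, the largest distance is attained at a pair
that is not inverted. -/
theorem Equiv.Perm.exists_not_invertedPair {v v' : ι → ℝ}
    (hv : ∀ a b, p a ≤ p b → v a ≤ v b) (hv' : ∀ a b, p a ≤ p b → v' a ≤ v' b)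
    (σ : Equiv.Perm ι) (a : ι) :
    ∃ b, ¬ InvertedPair p v v' (σ b) b ∧ |v' a - v (σ a)| ≤ |v' b - v (σ b)| := by
  by_cases ha : InvertedPair p v v' (σ a) a
  · rcases ha with ⟨h1, h2⟩ | ⟨h1, h2⟩
    · obtain ⟨b, hb1, hb2⟩ := σ.exists_le_and_le_apply p (σ a)
      have e1 := hv' b a (hb1.trans h1.le)
      have e2 := hv _ _ hb2
      refine ⟨b, ?_, ?_⟩
      · rintro (⟨h3, -⟩ | ⟨-, h3⟩)
        · omega
        · linarith
      · rw [abs_of_nonpos (by linarith), abs_of_nonpos (by linarith)]; linarith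
    · obtain ⟨c, hc1, hc2⟩ := Equiv.Perm.exists_le_and_le_apply σ.symm p (σ a)
      obtain ⟨b, rfl⟩ := σ.surjective c
      rw [Equiv.symm_apply_apply] at hc2
      have e1 := hv' a b (h1.le.trans hc2)
      have e2 := hv _ _ hc1
      refine ⟨b, ?_, ?_⟩
      · rintro (⟨-, h3⟩ | ⟨h3, -⟩)
        · linarith
        · omega
      · rw [abs_of_nonneg (by linarith), abs_of_nonneg (by linarith)]; linarith
  · exact ⟨a, ha, le_rfl⟩

end Permutations

theorem gauss_nonneg (t y : ℝ) : 0 ≤ gauss t y := by unfold gauss; positivity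

theorem gauss_eq_gaussianPDFReal {t : ℝ} (ht : 0 < t) :
    gauss t = ProbabilityTheory.gaussianPDFReal 0 ⟨t, ht.le⟩ := by
  ext y; simp [gauss, ProbabilityTheory.gaussianPDFReal]; rfl

theorem integrable_gauss {t : ℝ} (ht : 0 < t) : Integrable (gauss t) := by
  rw [gauss_eq_gaussianPDFReal ht]; exact ProbabilityTheory.integrable_gaussianPDFReal _ _

theorem integral_gauss {t : ℝ} (ht : 0 < t) : ∫ y, gauss t y = 1 := by
  rw [gauss_eq_gaussianPDFReal ht]
  exact ProbabilityTheory.integral_gaussianPDFReal_eq_one _ fun h => ht.ne' (congrArg NNReal.toReal h)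

theorem continuous_gauss (t : ℝ) : Continuous (gauss t) := by unfold gauss; fun_prop

theorem gaussCDF_nonneg (t y : ℝ) : 0 ≤ gaussCDF t y :=
  integral_nonneg fun z => gauss_nonneg t z

theorem one_sub_gaussCDF {t : ℝ} (ht : 0 < t) (y : ℝ) :
    1 - gaussCDF t y = ∫ z in Ioi y, gauss t z := by
  rw [gaussCDF, sub_eq_iff_eq_add', ← integral_gauss ht, ← compl_Iic]
  exact (integral_add_compl measurableSet_Iic (integrable_gauss ht)).symm

theorem gaussCDF_le_one {t : ℝ} (ht : 0 < t) (y : ℝ) : gaussCDF t y ≤ 1 := by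
  have : 0 ≤ ∫ z in Ioi y, gauss t z := integral_nonneg fun z => gauss_nonneg t z
  linarith [one_sub_gaussCDF ht y]

theorem monotone_gaussCDF {t : ℝ} (ht : 0 < t) : Monotone (gaussCDF t) := fun _ _ hab =>
  setIntegral_mono_set (integrable_gauss ht).integrableOn
    (Filter.Eventually.of_forall fun z => gauss_nonneg t z)
    (Iic_subset_Iic.2 hab).eventuallyLE

/-- The Gaussian mass of a set lying on the far side of `y` from the origin. -/
theorem setIntegral_gauss_le {t y : ℝ} (ht : 0 < t) {s : Set ℝ} (hs : MeasurableSet s)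
    (h : ∀ z ∈ s, 0 ≤ y * (z - y)) :
    ∫ z in s, gauss t z ≤ Real.exp (-y ^ 2 / (2 * t)) := by
  have hi : Integrable fun z => Real.exp (-y ^ 2 / (2 * t)) * gauss t (z - y) :=
    ((integrable_gauss ht).comp_sub_right y).const_mul _
  calc ∫ z in s, gauss t z
      ≤ ∫ z in s, Real.exp (-y ^ 2 / (2 * t)) * gauss t (z - y) := by
        refine setIntegral_mono_on (integrable_gauss ht).integrableOn hi.integrableOn hs
          fun z hz => ?_
        have := h z hz
        rw [gauss, gauss, mul_left_comm, ← Real.exp_add, ← add_div]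
        gcongr
        nlinarith
    _ ≤ ∫ z, Real.exp (-y ^ 2 / (2 * t)) * gauss t (z - y) :=
        setIntegral_le_integral hi (Filter.Eventually.of_forall fun z =>
          mul_nonneg (Real.exp_pos _).le (gauss_nonneg _ _))
    _ = Real.exp (-y ^ 2 / (2 * t)) := by
        rw [integral_const_mul, integral_sub_right_eq_self (gauss t), integral_gauss ht, mul_one]

theorem exp_half_le {t : ℝ} (ht : 0 < t) (y : ℝ) :
    Real.exp (-y ^ 2 / (2 * t)) ≤ Real.exp (-y ^ 2 / (4 * t)) := by
  rw [Real.exp_le_exp, neg_div, neg_div, neg_le_neg_iff]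
  gcongr
  linarith

theorem gauss_le {t : ℝ} (ht : 0 < t) (y : ℝ) :
    gauss t y ≤ (Real.sqrt t)⁻¹ * Real.exp (-y ^ 2 / (4 * t)) := by
  unfold gauss
  refine mul_le_mul (inv_anti₀ (Real.sqrt_pos.2 ht) (Real.sqrt_le_sqrt ?_)) (exp_half_le ht y)
    (Real.exp_pos _).le (by positivity)
  nlinarith [Real.pi_gt_three]

theorem abs_gaussDeriv_le {t : ℝ} (ht : 0 < t) (y : ℝ) :
    |gaussDeriv t y| ≤ (Real.sqrt t)⁻¹ * (Real.sqrt t)⁻¹ * Real.exp (-y ^ 2 / (4 * t)) := by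
  set s := Real.sqrt t with hs
  have hs0 : 0 < s := Real.sqrt_pos.2 ht
  have hst : t = s ^ 2 := (Real.sq_sqrt ht.le).symm
  have h1 : s ^ 3 ≤ Real.sqrt (2 * Real.pi * t ^ 3) := by
    apply Real.le_sqrt_of_sq_le
    rw [hst]
    nlinarith [Real.pi_gt_three, pow_pos hs0 6]
  have h2 : |y| / s ≤ Real.exp (y ^ 2 / (4 * t)) := by
    have e : y ^ 2 / (4 * t) = (|y| / s) ^ 2 / 4 := by
      rw [div_pow, sq_abs, hst]; field_simp
    rw [e]
    nlinarith [Real.add_one_le_exp ((|y| / s) ^ 2 / 4), sq_nonneg (|y| / s / 2 - 1)]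
  have h3 : Real.exp (-y ^ 2 / (2 * t)) =
      Real.exp (-y ^ 2 / (4 * t)) * (Real.exp (y ^ 2 / (4 * t)))⁻¹ := by
    rw [← Real.exp_neg, ← Real.exp_add]; congr 1; field_simp; ring
  unfold gaussDeriv
  rw [abs_mul, abs_div, abs_neg, abs_of_pos (Real.exp_pos _), abs_of_nonneg (Real.sqrt_nonneg _),
    h3]
  calc |y| / Real.sqrt (2 * Real.pi * t ^ 3) *
        (Real.exp (-y ^ 2 / (4 * t)) * (Real.exp (y ^ 2 / (4 * t)))⁻¹)
      ≤ |y| / s ^ 3 * (Real.exp (-y ^ 2 / (4 * t)) * (Real.exp (y ^ 2 / (4 * t)))⁻¹) := by gcongr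
    _ = s⁻¹ * s⁻¹ * Real.exp (-y ^ 2 / (4 * t)) *
        (|y| / s * (Real.exp (y ^ 2 / (4 * t)))⁻¹) := by field_simp
    _ ≤ s⁻¹ * s⁻¹ * Real.exp (-y ^ 2 / (4 * t)) * 1 := by
        gcongr
        rw [← div_eq_mul_inv]
        exact (div_le_one (Real.exp_pos _)).2 h2
    _ = _ := mul_one _

/-- The matrix whose determinant is `qKer`. -/
noncomputable def qMat (n : ℕ) (t : ℝ) (w w' : (Fin (n + 1) → ℝ) × (Fin n → ℝ)) :
    Matrix (Fin (n + 1) ⊕ Fin n) (Fin (n + 1) ⊕ Fin n) ℝ :=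
  Matrix.fromBlocks
    (Matrix.of fun i j : Fin (n + 1) => gauss t (w'.1 j - w.1 i))
    (Matrix.of fun (i : Fin (n + 1)) (j : Fin n) =>
      gaussCDF t (w'.2 j - w.1 i) - (if (i : ℕ) ≤ (j : ℕ) then (1 : ℝ) else 0))
    (Matrix.of fun (i : Fin n) (j : Fin (n + 1)) => gaussDeriv t (w'.1 j - w.2 i))
    (Matrix.of fun i j : Fin n => gauss t (w'.2 j - w.2 i))

theorem qKer_eq_sum (n : ℕ) (t : ℝ) (w w' : (Fin (n + 1) → ℝ) × (Fin n → ℝ)) :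
    qKer n t w w' =
      ∑ σ : Equiv.Perm (Fin (n + 1) ⊕ Fin n),
        (Equiv.Perm.sign σ : ℝ) * ∏ a, qMat n t w w' (σ a) a := by
  rw [qKer, Matrix.det_apply']
  rfl

theorem measurable_qKer (n : ℕ) {t : ℝ} (ht : 0 < t) (w : (Fin (n + 1) → ℝ) × (Fin n → ℝ)) :
    Measurable (qKer n t w) := by
  have h : ∀ r c, Measurable fun w' => qMat n t w w' r c := by
    have hg : Measurable (gauss t) := (continuous_gauss t).measurable
    have hd : Measurable (gaussDeriv t) := by unfold gaussDeriv; fun_prop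
    have hc : Measurable (gaussCDF t) := (monotone_gaussCDF ht).measurable
    rintro (i | i) (j | j) <;> simp only [qMat, Matrix.fromBlocks_apply₁₁,
      Matrix.fromBlocks_apply₁₂, Matrix.fromBlocks_apply₂₁, Matrix.fromBlocks_apply₂₂,
      Matrix.of_apply] <;> fun_prop
  rw [show qKer n t w = _ from funext fun w' => qKer_eq_sum n t w w']
  exact Finset.measurable_sum _ fun σ _ =>
    (Finset.measurable_prod _ fun a _ => h (σ a) a).const_mul _

/-- The scale of the entries of `qMat` in a given row. -/
noncomputable def rowScale (n : ℕ) (t : ℝ) : Fin (n + 1) ⊕ Fin n → ℝ :=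
  Sum.elim (fun _ => 1) (fun _ => (Real.sqrt t)⁻¹)

/-- The scale of the entries of `qMat` in a given column. -/
noncomputable def colScale (n : ℕ) (t : ℝ) : Fin (n + 1) ⊕ Fin n → ℝ :=
  Sum.elim (fun _ => (Real.sqrt t)⁻¹) (fun _ => 1)

theorem prod_rowScale_mul_colScale (n : ℕ) (t : ℝ) (σ : Equiv.Perm (Fin (n + 1) ⊕ Fin n)) :
    ∏ a, (rowScale n t (σ a) * colScale n t a) =
      ((Real.sqrt t)⁻¹) ^ Fintype.card (Fin (n + 1) ⊕ Fin n) := by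
  rw [Finset.prod_mul_distrib, Equiv.prod_comp σ (rowScale n t)]
  simp [rowScale, colScale]
  ring

theorem abs_qMat_le_of_not_inverted {n : ℕ} {t : ℝ} (ht : 0 < t)
    (w w' : (Fin (n + 1) → ℝ) × (Fin n → ℝ)) (r c : Fin (n + 1) ⊕ Fin n)
    (h : ¬ InvertedPair (interPos n) (interVal w) (interVal w') r c) :
    |qMat n t w w' r c| ≤ rowScale n t r * colScale n t c *
      Real.exp (-(interVal w' c - interVal w r) ^ 2 / (4 * t)) := by
  rcases r with i | i <;> rcases c with j | j <;>
    simp only [qMat, interVal, rowScale, colScale, Sum.elim_inl, Sum.elim_inr, one_mul, mul_one,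
      Matrix.fromBlocks_apply₁₁, Matrix.fromBlocks_apply₁₂, Matrix.fromBlocks_apply₂₁,
      Matrix.fromBlocks_apply₂₂, Matrix.of_apply]
  · rw [abs_of_nonneg (gauss_nonneg _ _)]; exact gauss_le ht _
  · refine le_trans ?_ (exp_half_le ht _)
    simp only [InvertedPair, interPos, interVal, Sum.elim_inl, Sum.elim_inr, not_or, not_and,
      not_lt] at h
    split_ifs with hij
    · have h1 := h.1 (by omega)
      rw [abs_sub_comm, abs_of_nonneg (by linarith [gaussCDF_le_one ht (w'.2 j - w.1 i)]),
        one_sub_gaussCDF ht]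
      exact setIntegral_gauss_le ht measurableSet_Ioi fun z hz =>
        mul_nonneg (by linarith) (by linarith [mem_Ioi.1 hz])
    · have h1 := h.2 (by omega)
      rw [sub_zero, abs_of_nonneg (gaussCDF_nonneg _ _)]
      exact setIntegral_gauss_le ht measurableSet_Iic fun z hz =>
        mul_nonneg_of_nonpos_of_nonpos (by linarith) (by linarith [mem_Iic.1 hz])
  · exact abs_gaussDeriv_le ht _
  · rw [abs_of_nonneg (gauss_nonneg _ _)]; exact gauss_le ht _

theorem abs_qMat_le {n : ℕ} {t : ℝ} (ht : 0 < t)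
    (w w' : (Fin (n + 1) → ℝ) × (Fin n → ℝ)) (r c : Fin (n + 1) ⊕ Fin n) :
    |qMat n t w w' r c| ≤ rowScale n t r * colScale n t c := by
  have he : ∀ y : ℝ, Real.exp (-y ^ 2 / (4 * t)) ≤ 1 := fun y => by
    rw [Real.exp_le_one_iff]
    exact div_nonpos_of_nonpos_of_nonneg (by nlinarith) (by positivity)
  have hs : 0 ≤ (Real.sqrt t)⁻¹ := by positivity
  rcases r with i | i <;> rcases c with j | j <;>
    simp only [qMat, rowScale, colScale, Sum.elim_inl, Sum.elim_inr, one_mul, mul_one,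
      Matrix.fromBlocks_apply₁₁, Matrix.fromBlocks_apply₁₂, Matrix.fromBlocks_apply₂₁,
      Matrix.fromBlocks_apply₂₂, Matrix.of_apply]
  · rw [abs_of_nonneg (gauss_nonneg _ _)]
    exact (gauss_le ht _).trans (mul_le_of_le_one_right hs (he _))
  · have h0 := gaussCDF_nonneg t (w'.2 j - w.1 i)
    have h1 := gaussCDF_le_one ht (w'.2 j - w.1 i)
    rw [abs_le]
    split_ifs <;> constructor <;> linarith
  · exact (abs_gaussDeriv_le ht _).trans (mul_le_of_le_one_right (mul_nonneg hs hs) (he _))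
  · rw [abs_of_nonneg (gauss_nonneg _ _)]
    exact (gauss_le ht _).trans (mul_le_of_le_one_right hs (he _))

/-- The number of coordinates, as a real number. -/
noncomputable def interDim (n : ℕ) : ℝ := Fintype.card (Fin (n + 1) ⊕ Fin n)

theorem interDim_pos (n : ℕ) : 0 < interDim n := by
  unfold interDim; exact_mod_cast Fintype.card_pos

/-- The product Gaussian density of variance `4 (2n+1) t`, centered at the point whose coordinates
are those of `w` permuted by `σ`. -/
noncomputable def permGauss (n : ℕ) (t : ℝ) (σ : Equiv.Perm (Fin (n + 1) ⊕ Fin n))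
    (w w' : (Fin (n + 1) → ℝ) × (Fin n → ℝ)) : ℝ :=
  ∏ a, gauss (4 * interDim n * t) (interVal w' a - interVal w (σ a))

theorem permGauss_nonneg (n : ℕ) (t : ℝ) (σ) (w w') : 0 ≤ permGauss n t σ w w' :=
  Finset.prod_nonneg fun _ _ => gauss_nonneg _ _

theorem integrable_prod_gauss {n : ℕ} {s : ℝ} (hs : 0 < s) (u : Fin (n + 1) ⊕ Fin n → ℝ) :
    Integrable fun w' : (Fin (n + 1) → ℝ) × (Fin n → ℝ) =>
      ∏ a, gauss s (interVal w' a - u a) := by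
  simp only [Fintype.prod_sum_type, interVal, Sum.elim_inl, Sum.elim_inr]
  exact Integrable.mul_prod
    (Integrable.fintype_prod (f := fun i x => gauss s (x - u (Sum.inl i)))
      fun i => (integrable_gauss hs).comp_sub_right _)
    (Integrable.fintype_prod (f := fun i x => gauss s (x - u (Sum.inr i)))
      fun i => (integrable_gauss hs).comp_sub_right _)

theorem integral_prod_gauss {n : ℕ} {s : ℝ} (hs : 0 < s) (u : Fin (n + 1) ⊕ Fin n → ℝ) :
    ∫ w' : (Fin (n + 1) → ℝ) × (Fin n → ℝ), ∏ a, gauss s (interVal w' a - u a) = 1 := by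
  have h : ∀ c : ℝ, ∫ x, gauss s (x - c) = 1 := fun c => by
    rw [integral_sub_right_eq_self (gauss s), integral_gauss hs]
  simp only [Fintype.prod_sum_type, interVal, Sum.elim_inl, Sum.elim_inr]
  rw [Measure.volume_eq_prod, integral_prod_mul
    (fun x : Fin (n + 1) → ℝ => ∏ i, gauss s (x i - u (Sum.inl i)))
    (fun x : Fin n → ℝ => ∏ i, gauss s (x i - u (Sum.inr i))),
    integral_fintype_prod_volume_eq_prod (fun i x => gauss s (x - u (Sum.inl i))),
    integral_fintype_prod_volume_eq_prod (fun i x => gauss s (x - u (Sum.inr i)))]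
  simp [h]

theorem integrable_permGauss {n : ℕ} {t : ℝ} (ht : 0 < t) (σ) (w) :
    Integrable (permGauss n t σ w) :=
  integrable_prod_gauss (by have := interDim_pos n; positivity) fun a => interVal w (σ a)

theorem integral_permGauss {n : ℕ} {t : ℝ} (ht : 0 < t) (σ) (w) :
    ∫ w', permGauss n t σ w w' = 1 :=
  integral_prod_gauss (by have := interDim_pos n; positivity) fun a => interVal w (σ a)

/-- The constant in the bound of the terms of `qKer` by Gaussian densities. -/
noncomputable def permGaussConst (n : ℕ) : ℝ :=
  Real.sqrt (8 * Real.pi * interDim n) ^ Fintype.card (Fin (n + 1) ⊕ Fin n)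

theorem permGaussConst_pos (n : ℕ) : 0 < permGaussConst n := by
  have := interDim_pos n
  unfold permGaussConst; positivity

theorem permGauss_eq {n : ℕ} (t : ℝ) (σ : Equiv.Perm (Fin (n + 1) ⊕ Fin n))
    (w w' : (Fin (n + 1) → ℝ) × (Fin n → ℝ)) :
    permGaussConst n * permGauss n t σ w w' =
      ((Real.sqrt t)⁻¹) ^ Fintype.card (Fin (n + 1) ⊕ Fin n) *
        Real.exp (-(∑ a, (interVal w' a - interVal w (σ a)) ^ 2) / (8 * interDim n * t)) := by
  have hN := interDim_pos n
  have h1 : Real.sqrt (2 * Real.pi * (4 * interDim n * t)) =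
      Real.sqrt (8 * Real.pi * interDim n) * Real.sqrt t := by
    rw [← Real.sqrt_mul (by positivity)]; congr 1; ring
  have h2 : Real.sqrt (8 * Real.pi * interDim n) ≠ 0 := (Real.sqrt_pos.2 (by positivity)).ne'
  simp only [permGauss, gauss, permGaussConst, Finset.prod_mul_distrib, Finset.prod_const,
    Finset.card_univ, ← Real.exp_sum]
  rw [← mul_assoc, ← mul_pow, h1, mul_inv, mul_inv_cancel_left₀ h2, ← Finset.sum_div,
    Finset.sum_neg_distrib]
  congr 3
  ring

theorem scale_mul_le_permGauss {n : ℕ} {t : ℝ} (ht : 0 < t)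
    (σ : Equiv.Perm (Fin (n + 1) ⊕ Fin n)) (w w' : (Fin (n + 1) → ℝ) × (Fin n → ℝ)) {X : ℝ}
    (hX : ∀ a, X ≤ Real.exp (-(interVal w' a - interVal w (σ a)) ^ 2 / (4 * t))) (b) :
    ((Real.sqrt t)⁻¹) ^ Fintype.card (Fin (n + 1) ⊕ Fin n) * X ≤
      permGaussConst n * (Real.exp (-(interVal w' b - interVal w (σ b)) ^ 2 / (8 * t)) *
        permGauss n t σ w w') := by
  have hN := interDim_pos n
  rw [mul_left_comm, permGauss_eq t, mul_left_comm]
  refine mul_le_mul_of_nonneg_left ?_ (by positivity)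
  obtain ⟨m, hm⟩ := Finite.exists_max fun a => (interVal w' a - interVal w (σ a)) ^ 2
  refine (hX m).trans ?_
  rw [← Real.exp_add, Real.exp_le_exp]
  have hsum : ∑ a, (interVal w' a - interVal w (σ a)) ^ 2 ≤
      interDim n * (interVal w' m - interVal w (σ m)) ^ 2 := by
    refine (Finset.sum_le_sum fun a _ => hm a).trans (le_of_eq ?_)
    rw [Finset.sum_const, nsmul_eq_mul]; rfl
  have h1 : (∑ a, (interVal w' a - interVal w (σ a)) ^ 2) / (8 * interDim n * t) ≤
      (interVal w' m - interVal w (σ m)) ^ 2 / (8 * t) := by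
    rw [div_le_div_iff₀ (by positivity) (by positivity)]
    nlinarith
  have h2 : (interVal w' b - interVal w (σ b)) ^ 2 / (8 * t) ≤
      (interVal w' m - interVal w (σ m)) ^ 2 / (8 * t) :=
    div_le_div_of_nonneg_right (hm b) (by positivity)
  have h3 : -(interVal w' m - interVal w (σ m)) ^ 2 / (4 * t) =
      -((interVal w' m - interVal w (σ m)) ^ 2 / (8 * t)) -
        (interVal w' m - interVal w (σ m)) ^ 2 / (8 * t) := by
    field_simp; ring
  rw [h3, neg_div, neg_div]
  linarith

/-- Every term of the determinant `qKer` is bounded by a multiple of a Gaussian density, with an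
additional decay in any one of the distances. -/
theorem abs_prod_qMat_le {n : ℕ} {t : ℝ} (ht : 0 < t)
    (σ : Equiv.Perm (Fin (n + 1) ⊕ Fin n)) {w w' : (Fin (n + 1) → ℝ) × (Fin n → ℝ)}
    (hw : w ∈ Wint n) (hw' : w' ∈ Wint n) (b) :
    |∏ a, qMat n t w w' (σ a) a| ≤
      permGaussConst n * (Real.exp (-(interVal w' b - interVal w (σ b)) ^ 2 / (8 * t)) *
        permGauss n t σ w w') := by
  classical
  let E : Fin (n + 1) ⊕ Fin n → ℝ := fun a =>
    if InvertedPair (interPos n) (interVal w) (interVal w') (σ a) a then 1 else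
      Real.exp (-(interVal w' a - interVal w (σ a)) ^ 2 / (4 * t))
  have hE0 : ∀ a, 0 ≤ E a := fun a => by simp only [E]; split_ifs <;> positivity
  have hE1 : ∀ a, E a ≤ 1 := fun a => by
    simp only [E]; split_ifs
    · exact le_rfl
    · rw [Real.exp_le_one_iff]
      exact div_nonpos_of_nonpos_of_nonneg (by nlinarith) (by positivity)
  have hE : ∀ a, |qMat n t w w' (σ a) a| ≤ rowScale n t (σ a) * colScale n t a * E a := fun a => by
    simp only [E]; split_ifs with h
    · rw [mul_one]; exact abs_qMat_le ht _ _ _ _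
    · exact abs_qMat_le_of_not_inverted ht _ _ _ _ h
  have hprod : |∏ a, qMat n t w w' (σ a) a| ≤
      ((Real.sqrt t)⁻¹) ^ Fintype.card (Fin (n + 1) ⊕ Fin n) * ∏ a, E a := by
    rw [Finset.abs_prod, ← prod_rowScale_mul_colScale n t σ, ← Finset.prod_mul_distrib]
    exact Finset.prod_le_prod (fun _ _ => abs_nonneg _) fun a _ => hE a
  refine hprod.trans (scale_mul_le_permGauss ht σ w w' (fun a => ?_) b)
  obtain ⟨c, hc, hac⟩ := σ.exists_not_invertedPair (p := interPos n)
    (fun _ _ h => interVal_mono hw h) (fun _ _ h => interVal_mono hw' h) a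
  calc ∏ a, E a ≤ E c := by
        rw [← Finset.mul_prod_erase _ _ (Finset.mem_univ c)]
        exact mul_le_of_le_one_right (hE0 c) (Finset.prod_le_one (fun _ _ => hE0 _) fun _ _ => hE1 _)
    _ = Real.exp (-(interVal w' c - interVal w (σ c)) ^ 2 / (4 * t)) := if_neg hc
    _ ≤ _ := by
        rw [Real.exp_le_exp, neg_div, neg_div, neg_le_neg_iff]
        gcongr 1
        exact sq_le_sq.2 hac

/-- The diagonal term of the determinant satisfies the same bound everywhere. -/
theorem prod_gauss_le {n : ℕ} {t : ℝ} (ht : 0 < t)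
    (w w' : (Fin (n + 1) → ℝ) × (Fin n → ℝ)) (b) :
    ∏ a, gauss t (interVal w' a - interVal w a) ≤
      permGaussConst n * (Real.exp (-(interVal w' b - interVal w b) ^ 2 / (8 * t)) *
        permGauss n t 1 w w') := by
  have h1 : ∏ a, gauss t (interVal w' a - interVal w a) ≤
      ((Real.sqrt t)⁻¹) ^ Fintype.card (Fin (n + 1) ⊕ Fin n) *
        ∏ a, Real.exp (-(interVal w' a - interVal w a) ^ 2 / (4 * t)) := by
    rw [← Finset.card_univ, ← Finset.prod_const, ← Finset.prod_mul_distrib]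
    exact Finset.prod_le_prod (fun _ _ => gauss_nonneg _ _) fun a _ => gauss_le ht _
  refine h1.trans (scale_mul_le_permGauss ht 1 w w' (fun a => ?_) b)
  rw [← Finset.mul_prod_erase _ _ (Finset.mem_univ a)]
  refine mul_le_of_le_one_right (Real.exp_pos _).le
    (Finset.prod_le_one (fun _ _ => (Real.exp_pos _).le) fun c _ => ?_)
  rw [Real.exp_le_one_iff]
  exact div_nonpos_of_nonpos_of_nonneg (by nlinarith) (by positivity)

theorem prod_qMat_one (n : ℕ) (t : ℝ) (w w' : (Fin (n + 1) → ℝ) × (Fin n → ℝ)) :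
    ∏ a, qMat n t w w' ((1 : Equiv.Perm (Fin (n + 1) ⊕ Fin n)) a) a =
      ∏ a, gauss t (interVal w' a - interVal w a) :=
  Finset.prod_congr rfl fun a _ => by cases a <;> rfl

/-- Bound of a quantity dominated by a Gaussian density, times a function that is at most `ε`
where all distances are less than `δ`. -/
theorem mul_le_permGauss {n : ℕ} {t : ℝ} (ht : 0 < t)
    {σ : Equiv.Perm (Fin (n + 1) ⊕ Fin n)} {w w' : (Fin (n + 1) → ℝ) × (Fin n → ℝ)}
    {P h ε δ B : ℝ} (hP : ∀ b, |P| ≤ permGaussConst n *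
      (Real.exp (-(interVal w' b - interVal w (σ b)) ^ 2 / (8 * t)) * permGauss n t σ w w'))
    (hε : 0 ≤ ε) (hδ : 0 < δ) (hB : |h| ≤ B)
    (hh : (∀ a, |interVal w' a - interVal w (σ a)| < δ) → |h| ≤ ε) :
    |P * h| ≤ permGaussConst n * (ε + B * Real.exp (-δ ^ 2 / (8 * t))) *
      permGauss n t σ w w' := by
  have hC := permGaussConst_pos n
  have hG := permGauss_nonneg n t σ w w'
  have hB0 : 0 ≤ B := (abs_nonneg _).trans hB
  rw [abs_mul]
  by_cases hc : ∀ a, |interVal w' a - interVal w (σ a)| < δ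
  · have h1 : |P| ≤ permGaussConst n * permGauss n t σ w w' := by
      refine (hP (Sum.inl 0)).trans (mul_le_mul_of_nonneg_left (mul_le_of_le_one_left hG ?_) hC.le)
      rw [Real.exp_le_one_iff]
      exact div_nonpos_of_nonpos_of_nonneg (by nlinarith) (by positivity)
    calc |P| * |h| ≤ (permGaussConst n * permGauss n t σ w w') * ε :=
          mul_le_mul h1 (hh hc) (abs_nonneg _) (by positivity)
      _ = permGaussConst n * ε * permGauss n t σ w w' := by ring
      _ ≤ _ := by gcongr; exact le_add_of_nonneg_right (by positivity)
  · push Not at hc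
    obtain ⟨b, hb⟩ := hc
    have h1 : |P| ≤ permGaussConst n * (Real.exp (-δ ^ 2 / (8 * t)) * permGauss n t σ w w') := by
      refine (hP b).trans ?_
      gcongr permGaussConst n * (?_ * _)
      rw [Real.exp_le_exp]
      gcongr 1
      rw [neg_le_neg_iff, ← sq_abs (_ - _)]
      gcongr
    calc |P| * |h| ≤ (permGaussConst n * (Real.exp (-δ ^ 2 / (8 * t)) * permGauss n t σ w w')) * B :=
          mul_le_mul h1 hB (abs_nonneg _) (by positivity)
      _ = permGaussConst n * (B * Real.exp (-δ ^ 2 / (8 * t))) * permGauss n t σ w w' := by ring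
      _ ≤ _ := by gcongr; exact le_add_of_nonneg_left hε

theorem integrableOn_qKer_mul {n : ℕ} {f : (Fin (n + 1) → ℝ) × (Fin n → ℝ) → ℝ}
    (hf : ContinuousOn f (Wint n)) {B : ℝ} (hB : ∀ w ∈ Wint n, |f w| ≤ B) {t : ℝ} (ht : 0 < t)
    {w : (Fin (n + 1) → ℝ) × (Fin n → ℝ)} (hw : w ∈ Wint n) :
    IntegrableOn (fun w' => qKer n t w w' * f w') (Wint n) := by
  have hW := (isClosed_Wint n).measurableSet
  have hg : Integrable fun w' => ∑ σ : Equiv.Perm (Fin (n + 1) ⊕ Fin n),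
      permGaussConst n * (B + B * Real.exp (-1 ^ 2 / (8 * t))) * permGauss n t σ w w' :=
    integrable_finsetSum _ fun σ _ => (integrable_permGauss ht σ w).const_mul _
  refine hg.integrableOn.mono' ((measurable_qKer n ht w).aestronglyMeasurable.mul
    (hf.aestronglyMeasurable hW)) ((ae_restrict_iff' hW).2 (.of_forall fun w' hw' => ?_))
  rw [Real.norm_eq_abs, qKer_eq_sum, Finset.sum_mul]
  refine (Finset.abs_sum_le_sum_abs _ _).trans (Finset.sum_le_sum fun σ _ => ?_)
  refine mul_le_permGauss ht (fun b => ?_) ((abs_nonneg _).trans (hB w hw)) one_pos (hB w' hw')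
    fun _ => hB w' hw'
  rw [abs_mul]
  rcases Int.units_eq_one_or (Equiv.Perm.sign σ) with e | e <;>
    simpa [e] using abs_prod_qMat_le ht σ hw hw' b

/-- A quantitative form of the convergence of `∫ q_t(w, w') f(w') dw'` to `f(w)`. -/
theorem abs_integral_qKer_mul_sub_le {n : ℕ} {f : (Fin (n + 1) → ℝ) × (Fin n → ℝ) → ℝ}
    (hf : ContinuousOn f (Wint n)) {B : ℝ} (hB : ∀ w ∈ Wint n, |f w| ≤ B) {t : ℝ} (ht : 0 < t)
    {w : (Fin (n + 1) → ℝ) × (Fin n → ℝ)} (hw : w ∈ Wint n) {ε δ : ℝ} (hε : 0 ≤ ε) (hδ : 0 < δ)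
    (hnear : ∀ w' ∈ Wint n, (∀ a, |interVal w' a - interVal w a| < δ) → |f w' - f w| ≤ ε)
    (hout : ∀ w' ∉ Wint n, (∀ a, |interVal w' a - interVal w a| < δ) → |f w| ≤ ε)
    (hperm : ∀ σ : Equiv.Perm (Fin (n + 1) ⊕ Fin n), σ ≠ 1 → ∀ w' ∈ Wint n,
      (∀ a, |interVal w' a - interVal w (σ a)| < δ) → |f w'| ≤ ε) :
    |(∫ w' in Wint n, qKer n t w w' * f w') - f w| ≤
      Fintype.card (Equiv.Perm (Fin (n + 1) ⊕ Fin n)) *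
        (permGaussConst n * (ε + 2 * B * Real.exp (-δ ^ 2 / (8 * t)))) := by
  classical
  have hW := (isClosed_Wint n).measurableSet
  have hB0 : 0 ≤ B := (abs_nonneg _).trans (hB w hw)
  set c := permGaussConst n * (ε + 2 * B * Real.exp (-δ ^ 2 / (8 * t))) with hc
  have hc0 : 0 ≤ c := mul_nonneg (permGaussConst_pos n).le (by positivity)
  let P : (Fin (n + 1) → ℝ) × (Fin n → ℝ) → ℝ := fun w' =>
    ∏ a, gauss t (interVal w' a - interVal w a)
  have hPi : Integrable P := integrable_prod_gauss ht (interVal w)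
  have hP1 : ∫ w', P w' = 1 := integral_prod_gauss ht (interVal w)
  have hP0 : ∀ w', 0 ≤ P w' := fun w' => Finset.prod_nonneg fun _ _ => gauss_nonneg _ _
  have hPle : ∀ w' b, |P w'| ≤ permGaussConst n *
      (Real.exp (-(interVal w' b - interVal w ((1 : Equiv.Perm (Fin (n + 1) ⊕ Fin n)) b)) ^ 2 /
        (8 * t)) * permGauss n t 1 w w') := fun w' b => by
    rw [abs_of_nonneg (hP0 w')]; exact prod_gauss_le ht w w' b
  have hg : Integrable fun w' => ∑ σ : Equiv.Perm (Fin (n + 1) ⊕ Fin n),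
      c * permGauss n t σ w w' :=
    integrable_finsetSum _ fun σ _ => (integrable_permGauss ht σ w).const_mul _
  have hgint : ∫ w', ∑ σ : Equiv.Perm (Fin (n + 1) ⊕ Fin n), c * permGauss n t σ w w' =
      Fintype.card (Equiv.Perm (Fin (n + 1) ⊕ Fin n)) * c := by
    rw [integral_finsetSum _ fun σ _ => (integrable_permGauss ht σ w).const_mul _]
    simp [integral_const_mul, integral_permGauss ht]
  have hbound : ∀ w', ‖(Wint n).indicator (fun w' => qKer n t w w' * f w') w' - P w' * f w‖ ≤
      ∑ σ : Equiv.Perm (Fin (n + 1) ⊕ Fin n), c * permGauss n t σ w w' := by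
    intro w'
    rw [Real.norm_eq_abs]
    by_cases hw' : w' ∈ Wint n
    · rw [indicator_of_mem hw', qKer_eq_sum, Finset.sum_mul]
      have hsplit : (∑ σ : Equiv.Perm (Fin (n + 1) ⊕ Fin n),
          (Equiv.Perm.sign σ : ℝ) * (∏ a, qMat n t w w' (σ a) a) * f w') - P w' * f w =
          ∑ σ : Equiv.Perm (Fin (n + 1) ⊕ Fin n),
          (Equiv.Perm.sign σ : ℝ) * (∏ a, qMat n t w w' (σ a) a) *
            (f w' - if σ = 1 then f w else 0) := by
        simp only [mul_sub, Finset.sum_sub_distrib, mul_ite, mul_zero, Finset.sum_ite_eq',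
          Finset.mem_univ, if_true, prod_qMat_one, P]
        simp
      rw [hsplit]
      refine (Finset.abs_sum_le_sum_abs _ _).trans (Finset.sum_le_sum fun σ _ => ?_)
      refine mul_le_permGauss ht (fun b => ?_) hε hδ ?_ ?_
      · rw [abs_mul]
        rcases Int.units_eq_one_or (Equiv.Perm.sign σ) with e | e <;>
          simpa [e] using abs_prod_qMat_le ht σ hw hw' b
      · split_ifs
        · exact (abs_sub _ _).trans (by linarith [hB w hw, hB w' hw'])
        · rw [sub_zero]; linarith [hB w' hw']
      · split_ifs with h
        · subst h; exact hnear w' hw'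
        · rw [sub_zero]; exact hperm σ h w' hw'
    · rw [indicator_of_notMem hw', zero_sub, abs_neg]
      refine (mul_le_permGauss (B := 2 * B) ht (hPle w') hε hδ (by linarith [hB w hw])
        (hout w' hw')).trans ?_
      exact Finset.single_le_sum (f := fun σ => c * permGauss n t σ w w')
        (fun σ _ => mul_nonneg hc0 (permGauss_nonneg _ _ _ _ _)) (Finset.mem_univ 1)
  have heq : (∫ w' in Wint n, qKer n t w w' * f w') - f w =
      ∫ w', ((Wint n).indicator (fun w' => qKer n t w w' * f w') w' - P w' * f w) := by
    rw [integral_sub ((integrable_indicator_iff hW).2 (integrableOn_qKer_mul hf hB ht hw))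
      (hPi.mul_const _), integral_indicator hW, integral_mul_const, hP1, one_mul]
  rw [heq, ← hgint, ← Real.norm_eq_abs]
  exact norm_integral_le_of_norm_le hg (.of_forall hbound)

/-- Uniform convergence on `S` follows from uniform continuity of `f` on a set `T` that contains
`S` and all points and boundary points of `Wint n` that are relevant for small times. -/
theorem tendstoUniformlyOn_integral_qKer_mul {n : ℕ}
    {f : (Fin (n + 1) → ℝ) × (Fin n → ℝ) → ℝ}
    (hf : ContinuousOn f (Wint n)) {B : ℝ} (hB : ∀ w ∈ Wint n, |f w| ≤ B)
    (hfr : ∀ w ∈ Wint n, w ∈ frontier (Wint n) → f w = 0)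
    {S : Set ((Fin (n + 1) → ℝ) × (Fin n → ℝ))} (hS : S ⊆ Wint n) (J : Set ℝ)
    (hJ : ∀ w ∈ S, ∀ a y, |y - interVal w a| < 1 → y ∈ J)
    (huc : UniformContinuousOn f (Wint n ∩ {w | ∀ a, interVal w a ∈ J})) :
    TendstoUniformlyOn (fun (t : ℝ) w => ∫ w' in Wint n, qKer n t w w' * f w')
      f (nhdsWithin (0 : ℝ) (Ioi 0)) S := by
  rw [Metric.tendstoUniformlyOn_iff]
  intro ε hε
  set k : ℝ := Fintype.card (Equiv.Perm (Fin (n + 1) ⊕ Fin n)) * permGaussConst n with hk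
  have hk0 : 0 < k := mul_pos (by exact_mod_cast Fintype.card_pos) (permGaussConst_pos n)
  set η := ε / (2 * k) with hη
  have hη0 : 0 < η := by positivity
  obtain ⟨δ₀, hδ₀, hδuc⟩ := Metric.uniformContinuousOn_iff.1 huc η hη0
  set δ := min 1 (δ₀ / 2) with hδ
  have hδ0 : 0 < δ := lt_min one_pos (by positivity)
  have hδ1 : δ ≤ 1 := min_le_left _ _
  have hδ2 : 2 * δ ≤ δ₀ := by linarith [min_le_right 1 (δ₀ / 2)]
  have hclose : ∀ w ∈ Wint n, (∀ a, interVal w a ∈ J) → ∀ a b, interPos n a < interPos n b →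
      interVal w b - interVal w a < 2 * δ → |f w| ≤ η := by
    intro w hw hwJ a b hab h
    obtain ⟨p, hp, hpf, hd, hpc⟩ := exists_frontier_near hw hab h
    have := hδuc p ⟨hp, fun c => by obtain ⟨d, e⟩ := hpc c; rw [e]; exact hwJ d⟩ w ⟨hw, hwJ⟩
      (hd.trans_le hδ2)
    rw [hfr p hp hpf, Real.dist_eq, zero_sub, abs_neg] at this
    exact this.le
  have hlim : Filter.Tendsto (fun t : ℝ => k * (2 * B * Real.exp (-δ ^ 2 / (8 * t))))
      (nhdsWithin (0 : ℝ) (Ioi 0)) (nhds (k * (2 * B * 0))) := by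
    refine Filter.Tendsto.const_mul _ (Filter.Tendsto.const_mul _
      (Real.tendsto_exp_atBot.comp ?_))
    have : (fun t : ℝ => -δ ^ 2 / (8 * t)) = fun t => (-δ ^ 2 / 8) * t⁻¹ := by
      ext t; rw [div_mul_eq_div_div, div_eq_mul_inv]
    rw [this]
    exact tendsto_inv_nhdsGT_zero.const_mul_atTop_of_neg
      (by have := pow_pos hδ0 2; linarith)
  rw [mul_zero, mul_zero] at hlim
  filter_upwards [hlim.eventually_lt_const (show (0 : ℝ) < ε / 2 by positivity),
    self_mem_nhdsWithin] with t hsmall (ht : 0 < t) w hwS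
  have hw := hS hwS
  have hwJ : ∀ a, interVal w a ∈ J := fun a => hJ w hwS a _ (by simp)
  have key := abs_integral_qKer_mul_sub_le hf hB ht hw hη0.le hδ0 ?_ ?_ ?_
  · rw [dist_comm, Real.dist_eq]
    refine key.trans_lt ?_
    rw [← mul_assoc, ← hk, mul_add]
    have : k * η = ε / 2 := by rw [hη]; field_simp
    linarith
  · intro w' hw' h
    have hd : dist w' w < δ₀ := (dist_lt_of_interVal hδ0 h).trans_le (by linarith)
    have := hδuc w' ⟨hw', fun a => hJ w hwS a _ ((h a).trans_le hδ1)⟩ w ⟨hw, hwJ⟩ hd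
    exact this.le
  · intro w' hw' h
    rw [mem_Wint_iff] at hw'
    push Not at hw'
    obtain ⟨a, b, hab, hlt⟩ := hw'
    have hne : interPos n a ≠ interPos n b := fun e => by
      rw [interPos_injective n e] at hlt; exact lt_irrefl _ hlt
    have ha := abs_lt.1 (h a)
    have hb := abs_lt.1 (h b)
    exact hclose w hw hwJ a b (lt_of_le_of_ne hab hne) (by linarith)
  · intro σ hσ w' hw' h
    obtain ⟨a, b, hab, hσab⟩ := Equiv.Perm.exists_inversion (interPos_injective n) hσ
    have ha := abs_lt.1 (h a)
    have hb := abs_lt.1 (h b)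
    have := interVal_mono hw hσab.le
    exact hclose w' hw' (fun c => hJ w hwS (σ c) _ ((h c).trans_le hδ1)) a b hab (by linarith)

/-- Let `f` be bounded and continuous on `W = W^{n+1,n}` and zero on a neighbourhood of the boundary
of `W`. Then `∫_W q^n_t(w,w') f(w') dw'` converges absolutely and tends to `f(w)` as `t ↓ 0`,
uniformly on compact subsets of `W`, and uniformly over all of `W` if `f` is uniformly continuous.
Only the values of `f` on `W` matter. -/
theorem stmt4 (n : ℕ) (hn : 1 ≤ n)
    (f : (Fin (n + 1) → ℝ) × (Fin n → ℝ) → ℝ)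
    (hf_cont : ContinuousOn f (Wint n)) (hf_bdd : ∃ C : ℝ, ∀ w ∈ Wint n, |f w| ≤ C)
    (hf_bdry : ∃ U : Set ((Fin (n + 1) → ℝ) × (Fin n → ℝ)),
      IsOpen U ∧ frontier (Wint n) ⊆ U ∧ ∀ w ∈ U ∩ Wint n, f w = 0) :
    (∀ t : ℝ, 0 < t → ∀ w ∈ Wint n,
      MeasureTheory.IntegrableOn (fun w' => qKer n t w w' * f w') (Wint n)) ∧
    (∀ K : Set ((Fin (n + 1) → ℝ) × (Fin n → ℝ)), IsCompact K → K ⊆ Wint n →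
      TendstoUniformlyOn (fun (t : ℝ) w => ∫ w' in Wint n, qKer n t w w' * f w')
        f (nhdsWithin (0 : ℝ) (Set.Ioi 0)) K) ∧
    (UniformContinuousOn f (Wint n) →
      TendstoUniformlyOn (fun (t : ℝ) w => ∫ w' in Wint n, qKer n t w w' * f w')
        f (nhdsWithin (0 : ℝ) (Set.Ioi 0)) (Wint n)) := by
  obtain ⟨B, hB⟩ := hf_bdd
  obtain ⟨U, -, hU, hfU⟩ := hf_bdry
  have hfr : ∀ w ∈ Wint n, w ∈ frontier (Wint n) → f w = 0 := fun w hw h => hfU w ⟨hU h, hw⟩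
  refine ⟨fun t ht w hw => integrableOn_qKer_mul hf_cont hB ht hw, fun K hK hKW => ?_,
    fun huc => ?_⟩
  · obtain ⟨M, hM⟩ := hK.isBounded.subset_closedBall 0
    have hMK : ∀ w ∈ K, ∀ a, |interVal w a| ≤ M := by
      intro w hw a
      have h : ‖w‖ ≤ M := by simpa using hM hw
      rw [Prod.norm_def, max_le_iff] at h
      cases a with
      | inl i => exact (norm_le_pi_norm w.1 i).trans h.1
      | inr i => exact (norm_le_pi_norm w.2 i).trans h.2
    refine tendstoUniformlyOn_integral_qKer_mul hf_cont hB hfr hKW (Icc (-(M + 1)) (M + 1)) ?_ ?_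
    · intro w hw a y hy
      have h1 := abs_le.1 (hMK w hw a)
      have h2 := abs_lt.1 hy
      exact ⟨by linarith, by linarith⟩
    · refine IsCompact.uniformContinuousOn_of_continuous ?_ (hf_cont.mono inter_subset_left)
      have hbox : {w : (Fin (n + 1) → ℝ) × (Fin n → ℝ) |
          ∀ a, interVal w a ∈ Icc (-(M + 1)) (M + 1)} =
          (univ.pi fun _ => Icc (-(M + 1)) (M + 1)) ×ˢ
            (univ.pi fun _ => Icc (-(M + 1)) (M + 1)) := by
        ext w
        simp only [mem_ofPred_eq, Sum.forall, mem_prod, mem_univ_pi]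
        rfl
      rw [hbox]
      exact ((isCompact_univ_pi fun _ => isCompact_Icc).prod
        (isCompact_univ_pi fun _ => isCompact_Icc)).inter_left (isClosed_Wint n)
  · exact tendstoUniformlyOn_integral_qKer_mul hf_cont hB hfr subset_rfl univ
      (fun _ _ _ _ _ => mem_univ _) (huc.mono inter_subset_left)
end

section
/- Let $n\ge 1$ and $W^n=\{x\in\mathbb R^n : x_1\le x_2\le\dots\le x_n\}$. For $t>0$ let $\phi_t(y)=(2\pi t)^{-1/2}e^{-y^2/(2t)}$; for $m\ge 1$ let $\Phi^{(m)}_t(y)=\int_{-\infty}^y \frac{(y-x)^{m-1}}{(m-1)!}\,\phi_t(x)\,dx$, and for $m\ge 0$ let $\Phi^{(-m)}_t$ be the $m$-th derivative of $\phi_t$ (so $\Phi^{(0)}_t=\phi_t$). Put $r_t(x,x')=\det\{\Phi^{(i-j)}_t(x'_j-x_i)\}_{1\le i,j\le n}$ for $x,x'\in W^n$. Let $f:W^n\to\mathbb R$ be bounded and continuous, and zero on a neighbourhood of the boundary of $W^n$. Then for all $t>0$ and $x\in W^n$ the integral $\int_{W^n} r_t(x,x')f(x')\,dx'$ converges absolutely,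 and $$\lim_{t\downarrow 0}\int_{W^n} r_t(x,x')f(x')\,dx' = f(x)$$ uniformly for $x$ in each compact subset of $W^n$. If moreover $f$ is uniformly continuous, then the convergence is uniform over all $x\in W^n$, that is, $\sup_{x\in W^n}\left|\int_{W^n} r_t(x,x')f(x')\,dx'-f(x)\right|\to 0$ as $t\downarrow 0$. -/
/-- `Φ^{(m)}_t` for `m : ℤ`: for `m ≥ 1` the `m`-th iterated integral of the Gaussian
density `φ_t`, for `m = 0` the density itself, and for `m ≤ −1` the `(−m)`-th derivative
of `φ_t`. -/
noncomputable def PhiIter (t : ℝ) (m : ℤ) (y : ℝ) : ℝ :=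
  if 1 ≤ m then
    ∫ x in Set.Iic y, ((y - x) ^ (m - 1).toNat / (Nat.factorial (m - 1).toNat : ℝ)) * gauss t x
  else iteratedDeriv (-m).toNat (fun z => gauss t z) y

/-- The kernel `r_t(x,x') = det{Φ^{(i−j)}_t(x'_j − x_i)}`. -/
noncomputable def rKer (n : ℕ) (t : ℝ) (x x' : Fin n → ℝ) : ℝ :=
  Matrix.det (Matrix.of fun i j : Fin n => PhiIter t ((i : ℤ) - (j : ℤ)) (x' j - x i))

/-- The chamber `W^n = {x : x_1 ≤ … ≤ x_n}`. -/
def Wcham (n : ℕ) : Set (Fin n → ℝ) := {x | Monotone x}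

open MeasureTheory Set

theorem exists_abs_pow_le_exp_sq (k : ℕ) {a : ℝ} (ha : 0 < a) :
    ∃ C : ℝ, 0 ≤ C ∧ ∀ x : ℝ, |x| ^ k ≤ C * Real.exp (a * x ^ 2) := by
  refine ⟨k.factorial * Real.exp (1 / (4 * a)), by positivity, fun x => ?_⟩
  have h1 := Real.pow_div_factorial_le_exp |x| (abs_nonneg x) k
  rw [div_le_iff₀ (by positivity)] at h1
  have h2 : |x| ≤ 1 / (4 * a) + a * x ^ 2 := by
    have : 1 / (4 * a) + a * x ^ 2 - |x| = a * (|x| - 1 / (2 * a)) ^ 2 := by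
      rw [← sq_abs x]; field_simp; ring
    nlinarith [mul_nonneg ha.le (sq_nonneg (|x| - 1 / (2 * a)))]
  calc |x| ^ k ≤ Real.exp |x| * k.factorial := h1
    _ ≤ Real.exp (1 / (4 * a) + a * x ^ 2) * k.factorial := by gcongr
    _ = _ := by rw [Real.exp_add]; ring

theorem Polynomial.exists_abs_eval_le_exp_sq (p : Polynomial ℝ) {a : ℝ} (ha : 0 < a) :
    ∃ C : ℝ, 0 ≤ C ∧ ∀ x : ℝ, |p.eval x| ≤ C * Real.exp (a * x ^ 2) := by
  induction p using Polynomial.induction_on' with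
  | add p q hp hq =>
    obtain ⟨C, hC, hp⟩ := hp
    obtain ⟨D, hD, hq⟩ := hq
    refine ⟨C + D, by positivity, fun x => ?_⟩
    rw [Polynomial.eval_add, add_mul]
    exact (abs_add_le _ _).trans (add_le_add (hp x) (hq x))
  | monomial k c =>
    obtain ⟨C, hC, h⟩ := exists_abs_pow_le_exp_sq k ha
    refine ⟨|c| * C, by positivity, fun x => ?_⟩
    rw [Polynomial.eval_monomial, abs_mul, abs_pow, mul_assoc]
    gcongr
    exact h x

theorem gauss_one_le (y : ℝ) : gauss 1 y ≤ Real.exp (-(1 / 2) * y ^ 2) := by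
  unfold gauss
  have h1 : (Real.sqrt (2 * Real.pi * 1))⁻¹ ≤ 1 := by
    apply inv_le_one_of_one_le₀
    rw [Real.one_le_sqrt]
    linarith [Real.pi_gt_three]
  calc _ ≤ 1 * Real.exp (-y ^ 2 / (2 * 1)) := by gcongr
    _ = _ := by rw [one_mul]; congr 1; ring

theorem gauss_scaling {s : ℝ} (hs : 0 < s) (y : ℝ) :
    gauss (s ^ 2) y = s⁻¹ * gauss 1 (y / s) := by
  unfold gauss
  rw [show 2 * Real.pi * s ^ 2 = (2 * Real.pi * 1) * s ^ 2 by ring,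
    Real.sqrt_mul (by positivity), Real.sqrt_sq hs.le, mul_inv]
  have : -y ^ 2 / (2 * s ^ 2) = -(y / s) ^ 2 / (2 * 1) := by field_simp
  rw [this]; ring

theorem contDiff_gauss (t : ℝ) {N : WithTop ℕ∞} : ContDiff ℝ N (gauss t) := by
  unfold gauss
  fun_prop

/-- The iterated integrals as convolutions over the half line. -/
theorem PhiIter_of_pos (t : ℝ) {m : ℤ} (hm : 1 ≤ m) (y : ℝ) :
    PhiIter t m y = ∫ w in Ioi (0 : ℝ),
      (w ^ (m - 1).toNat / ((m - 1).toNat.factorial : ℝ)) * gauss t (y - w) := by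
  rw [PhiIter, if_pos hm, ← integral_Ici_eq_integral_Ioi]
  have h := (Measure.measurePreserving_sub_left (volume : Measure ℝ) y).setIntegral_preimage_emb
    (Homeomorph.subLeft y).measurableEmbedding
    (fun w => (w ^ (m - 1).toNat / ((m - 1).toNat.factorial : ℝ)) * gauss t (y - w)) (Ici 0)
  rw [← h]
  have h2 : (fun x => y - x) ⁻¹' Ici (0 : ℝ) = Iic y := by ext x; simp
  rw [h2]
  simp

theorem PhiIter_of_nonpos (t : ℝ) {m : ℤ} (hm : ¬ 1 ≤ m) (y : ℝ) :
    PhiIter t m y = iteratedDeriv (-m).toNat (gauss t) y := by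
  rw [PhiIter, if_neg hm]

theorem PhiIter_zero (t y : ℝ) : PhiIter t 0 y = gauss t y := by
  rw [PhiIter_of_nonpos t (by norm_num)]; simp

theorem PhiIter_scaling {s : ℝ} (hs : 0 < s) (m : ℤ) (y : ℝ) :
    PhiIter (s ^ 2) m y = s ^ (m - 1) * PhiIter 1 m (y / s) := by
  by_cases hm : 1 ≤ m
  · rw [PhiIter_of_pos _ hm, PhiIter_of_pos _ hm]
    obtain ⟨k, hk⟩ := Int.eq_ofNat_of_zero_le (by linarith : 0 ≤ m - 1)
    rw [hk]
    simp only [Int.toNat_natCast, zpow_natCast]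
    have h := integral_comp_mul_left_Ioi
      (fun w => (w ^ k / (k.factorial : ℝ)) * gauss (s ^ 2) (y - w)) 0 hs
    rw [mul_zero, smul_eq_mul, eq_inv_mul_iff_mul_eq₀ hs.ne'] at h
    rw [← h, ← integral_const_mul, ← integral_const_mul]
    congr 1 with w
    rw [gauss_scaling hs, show (y - s * w) / s = y / s - w by field_simp, mul_pow]
    field_simp
  · rw [PhiIter_of_nonpos _ hm, PhiIter_of_nonpos _ hm]
    obtain ⟨k, hk⟩ := Int.eq_ofNat_of_zero_le (by linarith : 0 ≤ -m)
    rw [hk, show m - 1 = -((k + 1 : ℕ) : ℤ) by push_cast; linarith]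
    simp only [Int.toNat_natCast, zpow_neg, zpow_natCast]
    have h1 : gauss (s ^ 2) = fun z => s⁻¹ * gauss 1 (s⁻¹ * z) := by
      funext z; rw [gauss_scaling hs, div_eq_inv_mul]
    rw [h1, iteratedDeriv_const_mul_field, iteratedDeriv_comp_const_mul (contDiff_gauss 1)]
    simp only [div_eq_inv_mul]
    rw [pow_succ, mul_inv, inv_pow]; ring

theorem measurable_PhiIter (t : ℝ) (m : ℤ) : Measurable (PhiIter t m) := by
  by_cases hm : 1 ≤ m
  · rw [show PhiIter t m = _ from funext (PhiIter_of_pos t hm)]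
    refine (StronglyMeasurable.integral_prod_right (Continuous.stronglyMeasurable ?_)).measurable
    have := continuous_gauss t
    unfold Function.uncurry
    fun_prop
  · rw [show PhiIter t m = _ from funext (PhiIter_of_nonpos t hm)]
    exact ((contDiff_gauss t (N := (-m).toNat)).continuous_iteratedDeriv' _).measurable

theorem exists_abs_PhiIter_le_of_nonpos {m : ℤ} (hm : ¬ 1 ≤ m) :
    ∃ C : ℝ, 0 ≤ C ∧ ∀ y, |PhiIter 1 m y| ≤ C * Real.exp (-(1 / 4) * y ^ 2) := by
  obtain ⟨C, hC, h⟩ := Polynomial.exists_abs_eval_le_exp_sq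
    ((Polynomial.hermite (-m).toNat).map (Int.castRingHom ℝ)) (a := 1 / 4) (by norm_num)
  have h1 : gauss 1 = fun z => (Real.sqrt (2 * Real.pi * 1))⁻¹ * Real.exp (-(z ^ 2 / 2)) := by
    funext z; unfold gauss; congr 2; ring
  refine ⟨(Real.sqrt (2 * Real.pi * 1))⁻¹ * C, by positivity, fun y => ?_⟩
  rw [PhiIter_of_nonpos _ hm, h1, iteratedDeriv_const_mul_field, iteratedDeriv_eq_iterate,
    Polynomial.deriv_gaussian_eq_hermite_mul_gaussian, abs_mul, abs_mul, abs_mul, abs_pow,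
    abs_neg, abs_one, one_pow, one_mul, abs_of_nonneg (by positivity), Real.abs_exp, mul_assoc]
  have h2 := h y
  rw [Polynomial.eval_map, ← algebraMap_int_eq, ← Polynomial.aeval_def] at h2
  rw [mul_assoc _ C]
  refine mul_le_mul_of_nonneg_left ?_ (by positivity)
  calc _ ≤ C * Real.exp (1 / 4 * y ^ 2) * Real.exp (-(y ^ 2 / 2)) := by gcongr
    _ = _ := by rw [mul_assoc, ← Real.exp_add]; congr 2; ring

/-- A convolution of a power against the Gaussian is controlled by any bound for the Gaussian that
separates the variables. -/
theorem exists_abs_PhiIter_le_of_gauss_le {m : ℤ} (hm : 1 ≤ m) {c : ℝ} (hc : 0 < c) :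
    ∃ C : ℝ, 0 ≤ C ∧ ∀ y A : ℝ,
      (∀ w > 0, gauss 1 (y - w) ≤ A * Real.exp (-c * w ^ 2)) → |PhiIter 1 m y| ≤ C * A := by
  set k := (m - 1).toNat with hk
  obtain ⟨D, hD, h⟩ := exists_abs_pow_le_exp_sq k (a := c / 2) (by positivity)
  refine ⟨∫ w in Ioi (0 : ℝ), D / k.factorial * Real.exp (-(c / 2) * w ^ 2),
    setIntegral_nonneg measurableSet_Ioi fun w _ => by positivity, fun y A hA => ?_⟩
  rw [PhiIter_of_pos _ hm, ← integral_mul_const, ← Real.norm_eq_abs, ← hk]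
  refine norm_integral_le_of_norm_le
    (((integrable_exp_neg_mul_sq (by positivity)).const_mul _).mul_const _).integrableOn ?_
  refine (ae_restrict_mem measurableSet_Ioi).mono fun w hw => ?_
  have hw : 0 < w := hw
  have h1 := h w
  rw [abs_of_pos hw] at h1
  rw [Real.norm_eq_abs, abs_of_nonneg (mul_nonneg (by positivity) (gauss_nonneg _ _))]
  calc w ^ k / k.factorial * gauss 1 (y - w)
      ≤ D * Real.exp (c / 2 * w ^ 2) / k.factorial * (A * Real.exp (-c * w ^ 2)) := by
        gcongr
        · exact gauss_nonneg _ _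
        · exact hA w hw
    _ = D / k.factorial * (Real.exp (c / 2 * w ^ 2) * Real.exp (-c * w ^ 2)) * A := by ring
    _ = _ := by rw [← Real.exp_add]; congr 3; ring

theorem exists_abs_PhiIter_le_of_pos {m : ℤ} (hm : 1 ≤ m) {a : ℝ} (ha : 0 < a) :
    ∃ C : ℝ, 0 ≤ C ∧ (∀ y, |PhiIter 1 m y| ≤ C * Real.exp (a * y ^ 2)) ∧
      ∀ y ≤ 0, |PhiIter 1 m y| ≤ C * Real.exp (-(1 / 4) * y ^ 2) := by
  obtain ⟨C, hC, h⟩ := exists_abs_PhiIter_le_of_gauss_le hm (c := a / (1 + 2 * a))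
    (by positivity)
  obtain ⟨D, hD, h'⟩ := exists_abs_PhiIter_le_of_gauss_le hm (c := 1 / 2) (by positivity)
  refine ⟨max C D, le_max_of_le_left hC, fun y => ?_, fun y hy => ?_⟩
  · refine (h y (Real.exp (a * y ^ 2)) fun w _ => (gauss_one_le _).trans ?_).trans ?_
    · rw [← Real.exp_add, Real.exp_le_exp]
      have : a * y ^ 2 + -(a / (1 + 2 * a)) * w ^ 2 + 1 / 2 * (y - w) ^ 2
          = ((1 + 2 * a) * y - w) ^ 2 / (2 * (1 + 2 * a)) := by field_simp; ring
      have : 0 ≤ ((1 + 2 * a) * y - w) ^ 2 / (2 * (1 + 2 * a)) := by positivity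
      linarith
    · gcongr; exact le_max_left _ _
  · refine (h' y (Real.exp (-(1 / 4) * y ^ 2)) fun w hw => (gauss_one_le _).trans ?_).trans ?_
    · rw [← Real.exp_add, Real.exp_le_exp]
      nlinarith [mul_nonneg (neg_nonneg.2 hy) hw.le, sq_nonneg y]
    · gcongr; exact le_max_right _ _

theorem Equiv.Perm.exists_ge_apply_le {n : ℕ} (σ : Equiv.Perm (Fin n)) (j : Fin n) :
    ∃ p, j ≤ p ∧ σ p ≤ j := by
  by_contra! h
  have := Finset.card_le_card_of_injOn (s := Finset.Ici j) (t := Finset.Ioi j) σ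
    (fun p hp => by simpa using h p (by simpa using hp)) σ.injective.injOn
  rw [Fin.card_Ici, Fin.card_Ioi] at this
  have := j.isLt
  omega

theorem Equiv.Perm.exists_le_le_apply {n : ℕ} (σ : Equiv.Perm (Fin n)) (j : Fin n) :
    ∃ p, p ≤ j ∧ j ≤ σ p := by
  by_contra! h
  have := Finset.card_le_card_of_injOn (s := Finset.Iic j) (t := Finset.Iio j) σ
    (fun p hp => by simpa using h p (by simpa using hp)) σ.injective.injOn
  rw [Fin.card_Iic, Fin.card_Iio] at this
  omega

theorem Equiv.Perm.exists_gt_apply_le {n : ℕ} (σ : Equiv.Perm (Fin n)) {j : Fin n}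
    (hj : j < σ j) : ∃ p, j < p ∧ σ p ≤ j := by
  obtain ⟨p, hp, hp'⟩ := σ.exists_ge_apply_le j
  refine ⟨p, lt_of_le_of_ne hp ?_, hp'⟩
  rintro rfl
  exact absurd hp' (not_le.2 hj)

/-- Permuting one of two monotone vectors increases their distance. -/
theorem norm_sub_sq_le_sum_sub_perm_sq {n : ℕ} {x x' : Fin n → ℝ} (hx : Monotone x)
    (hx' : Monotone x') (σ : Equiv.Perm (Fin n)) :
    ‖x' - x‖ ^ 2 ≤ ∑ j, (x' j - x (σ j)) ^ 2 := by
  have hS : 0 ≤ ∑ j, (x' j - x (σ j)) ^ 2 := Finset.sum_nonneg fun _ _ => sq_nonneg _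
  rw [← Real.sqrt_le_sqrt_iff hS, Real.sqrt_sq (norm_nonneg _),
    pi_norm_le_iff_of_nonneg (Real.sqrt_nonneg _)]
  intro j
  have key : ∀ p, |x' p - x (σ p)| ≤ Real.sqrt (∑ j, (x' j - x (σ j)) ^ 2) := fun p => by
    rw [← Real.sqrt_sq_eq_abs]
    exact Real.sqrt_le_sqrt (Finset.single_le_sum (f := fun j => (x' j - x (σ j)) ^ 2)
      (fun _ _ => sq_nonneg _) (Finset.mem_univ p))
  rw [Pi.sub_apply, Real.norm_eq_abs, abs_le]
  constructor
  · obtain ⟨p, hp, hp'⟩ := σ.exists_le_le_apply j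
    have := (abs_le.1 (key p)).1
    linarith [hx' hp, hx hp']
  · obtain ⟨p, hp, hp'⟩ := σ.exists_ge_apply_le j
    have := (abs_le.1 (key p)).2
    linarith [hx' hp, hx hp']

theorem norm_comp_perm_symm_sub_sq_le {n : ℕ} (x x' : Fin n → ℝ) (σ : Equiv.Perm (Fin n)) :
    ‖x' ∘ σ.symm - x‖ ^ 2 ≤ ∑ j, (x' j - x (σ j)) ^ 2 := by
  have hS : 0 ≤ ∑ j, (x' j - x (σ j)) ^ 2 := Finset.sum_nonneg fun _ _ => sq_nonneg _
  rw [← Real.sqrt_le_sqrt_iff hS, Real.sqrt_sq (norm_nonneg _),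
    pi_norm_le_iff_of_nonneg (Real.sqrt_nonneg _)]
  intro i
  rw [Real.norm_eq_abs, ← Real.sqrt_sq_eq_abs]
  refine Real.sqrt_le_sqrt ?_
  have := Finset.single_le_sum (f := fun j => (x' j - x (σ j)) ^ 2)
      (fun _ _ => sq_nonneg _) (Finset.mem_univ (σ.symm i))
  simpa using this

theorem exists_abs_PhiIter_le (m : ℤ) {a : ℝ} (ha : 0 < a) :
    ∃ C : ℝ, 0 ≤ C ∧ (∀ y, |PhiIter 1 m y| ≤ C * Real.exp (a * y ^ 2)) ∧
      ∀ y, (y ≤ 0 ∨ m < 1) → |PhiIter 1 m y| ≤ C * Real.exp (-(1 / 4) * y ^ 2) := by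
  by_cases hm : 1 ≤ m
  · obtain ⟨C, hC, h, h'⟩ := exists_abs_PhiIter_le_of_pos hm ha
    exact ⟨C, hC, h, fun y hy => h' y (hy.resolve_right (not_lt.2 hm))⟩
  · obtain ⟨C, hC, h⟩ := exists_abs_PhiIter_le_of_nonpos hm
    refine ⟨C, hC, fun y => (h y).trans ?_, fun y _ => h y⟩
    gcongr
    linarith

theorem sum_ite_le_of_dominated {n : ℕ} (y : Fin n → ℝ) (G : Fin n → Prop) [DecidablePred G]
    (h : ∀ j, ¬ G j → ∃ p, G p ∧ y j ^ 2 ≤ y p ^ 2) :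
    ∑ j, (if G j then -(1 / 4) * y j ^ 2 else 1 / (8 * (n + 1)) * y j ^ 2)
      ≤ ∑ j, -(1 / (8 * (n + 1))) * y j ^ 2 := by
  set Y := ∑ j with G j, y j ^ 2 with hY
  set B := ∑ j with ¬ G j, y j ^ 2 with hB
  have hY0 : 0 ≤ Y := Finset.sum_nonneg fun _ _ => sq_nonneg _
  have hBY : B ≤ n * Y := by
    calc B ≤ ∑ j with ¬ G j, Y := by
          refine Finset.sum_le_sum fun j hj => ?_
          obtain ⟨p, hp, hjp⟩ := h j (by simpa using hj)
          exact hjp.trans (Finset.single_le_sum (f := fun j => y j ^ 2)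
            (fun _ _ => sq_nonneg _) (by simpa using hp))
      _ ≤ n * Y := by
          rw [Finset.sum_const, nsmul_eq_mul]
          gcongr
          simpa using Finset.card_filter_le (Finset.univ : Finset (Fin n)) (fun j => ¬ G j)
  rw [Finset.sum_ite, ← Finset.mul_sum, ← Finset.mul_sum, ← Finset.mul_sum,
    ← Finset.sum_filter_add_sum_filter_not Finset.univ G (fun j => y j ^ 2), ← hY, ← hB]
  have e : -(1 / (8 * ((n : ℝ) + 1))) * (Y + B) - (-(1 / 4) * Y + 1 / (8 * ((n : ℝ) + 1)) * B)
      = ((2 * (n : ℝ) + 1) * Y - 2 * B) / (8 * (n + 1)) := by field_simp; ring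
  have : 0 ≤ ((2 * (n : ℝ) + 1) * Y - 2 * B) / (8 * (n + 1)) := by
    apply div_nonneg _ (by positivity); nlinarith
  linarith

theorem exists_abs_prod_PhiIter_one_le {n : ℕ} (σ : Equiv.Perm (Fin n)) :
    ∃ C : ℝ, 0 ≤ C ∧ ∀ x x' : Fin n → ℝ, Monotone x → Monotone x' →
      |∏ j, PhiIter 1 ((σ j : ℤ) - (j : ℤ)) (x' j - x (σ j))| ≤
        C * ∏ j, Real.exp (-(1 / (8 * (n + 1))) * (x' j - x (σ j)) ^ 2) := by
  choose C hC hgrow hdecay using fun j : Fin n => exists_abs_PhiIter_le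
    ((σ j : ℤ) - (j : ℤ)) (a := 1 / (8 * ((n : ℝ) + 1))) (by positivity)
  refine ⟨∏ j, C j, Finset.prod_nonneg fun j _ => hC j, fun x x' hx hx' => ?_⟩
  classical
  have h := sum_ite_le_of_dominated (fun j => x' j - x (σ j))
    (fun j => x' j - x (σ j) ≤ 0 ∨ (σ j : ℤ) - (j : ℤ) < 1) (fun j hj => by
      rw [not_or, not_le, not_lt] at hj
      obtain ⟨p, hp, hp'⟩ := σ.exists_gt_apply_le (j := j) (by rw [Fin.lt_def]; omega)
      refine ⟨p, Or.inr ?_, ?_⟩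
      · rw [Fin.lt_def] at hp; rw [Fin.le_def] at hp'; omega
      · exact pow_le_pow_left₀ hj.1.le (by linarith [hx' hp.le, hx (hp'.trans
          (by rw [Fin.le_def]; omega : j ≤ σ j))]) 2)
  rw [Finset.abs_prod, ← Real.exp_sum]
  refine le_trans ?_ (mul_le_mul_of_nonneg_left (Real.exp_le_exp.2 h)
    (Finset.prod_nonneg fun j _ => hC j))
  rw [Real.exp_sum, ← Finset.prod_mul_distrib]
  refine Finset.prod_le_prod (fun _ _ => abs_nonneg _) fun j _ => ?_
  split_ifs with hG
  · exact hdecay j _ hG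
  · exact hgrow j _

/-- The width parameter of the Gaussian bound for the terms of the kernel. -/
noncomputable def kerRate (n : ℕ) : ℝ := 1 / (8 * (n + 1))

theorem kerRate_pos (n : ℕ) : 0 < kerRate n := by unfold kerRate; positivity

theorem prod_zpow_perm_sub {n : ℕ} (σ : Equiv.Perm (Fin n)) {s : ℝ} (hs : 0 < s) :
    ∏ j : Fin n, s ^ ((σ j : ℤ) - (j : ℤ) - 1) = ∏ _j : Fin n, s⁻¹ := by
  simp_rw [zpow_sub₀ hs.ne', zpow_natCast, zpow_one, div_eq_mul_inv, Finset.prod_mul_distrib]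
  rw [Equiv.prod_comp σ (fun i : Fin n => s ^ (i : ℕ)), Finset.prod_inv_distrib,
    mul_inv_cancel₀ (Finset.prod_pos fun _ _ => by positivity).ne', one_mul]

theorem exists_abs_prod_PhiIter_le (n : ℕ) :
    ∃ C : ℝ, 1 ≤ C ∧ ∀ (σ : Equiv.Perm (Fin n)) (s : ℝ), 0 < s →
      ∀ x x' : Fin n → ℝ, Monotone x → Monotone x' →
      |∏ j, PhiIter (s ^ 2) ((σ j : ℤ) - (j : ℤ)) (x' j - x (σ j))| ≤
        C * ∏ j, (s⁻¹ * Real.exp (-kerRate n * ((x' j - x (σ j)) / s) ^ 2)) := by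
  choose C hC h using fun σ : Equiv.Perm (Fin n) => exists_abs_prod_PhiIter_one_le σ
  have hsum : 0 ≤ ∑ σ, C σ := Finset.sum_nonneg fun σ _ => hC σ
  refine ⟨1 + ∑ σ, C σ, by linarith, fun σ s hs x x' hx hx' => ?_⟩
  simp_rw [PhiIter_scaling hs, Finset.prod_mul_distrib, prod_zpow_perm_sub σ hs]
  have hpos : 0 ≤ ∏ _j : Fin n, s⁻¹ := Finset.prod_nonneg fun _ _ => by positivity
  rw [abs_mul, abs_of_nonneg hpos, mul_left_comm]
  refine mul_le_mul_of_nonneg_left ?_ hpos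
  have hle : C σ ≤ 1 + ∑ σ, C σ := by
    have := Finset.single_le_sum (f := C) (fun σ _ => hC σ) (Finset.mem_univ σ)
    linarith
  have h1 := h σ (fun i => x i / s) (fun i => x' i / s)
    (fun i j hij => div_le_div_of_nonneg_right (hx hij) hs.le)
    (fun i j hij => div_le_div_of_nonneg_right (hx' hij) hs.le)
  simp_rw [← sub_div] at h1
  refine h1.trans ?_
  unfold kerRate
  gcongr

/-- The term of the permutation expansion of the kernel that belongs to `σ`. -/
noncomputable def kerTerm {n : ℕ} (σ : Equiv.Perm (Fin n)) (t : ℝ) (x x' : Fin n → ℝ) : ℝ :=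
  ∏ j, PhiIter t ((σ j : ℤ) - (j : ℤ)) (x' j - x (σ j))

theorem rKer_eq_sum (n : ℕ) (t : ℝ) (x x' : Fin n → ℝ) :
    rKer n t x x' = ∑ σ : Equiv.Perm (Fin n), ((Equiv.Perm.sign σ : ℤ) : ℝ) * kerTerm σ t x x' := by
  rw [rKer, Matrix.det_apply']
  rfl

theorem measurable_kerTerm {n : ℕ} (σ : Equiv.Perm (Fin n)) (t : ℝ) (x : Fin n → ℝ) :
    Measurable (kerTerm σ t x) := by
  unfold kerTerm
  refine Finset.measurable_prod _ fun j _ => (measurable_PhiIter t _).comp ?_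
  fun_prop

theorem measurable_rKer (n : ℕ) (t : ℝ) (x : Fin n → ℝ) : Measurable (rKer n t x) := by
  rw [show rKer n t x = _ from funext (rKer_eq_sum n t x)]
  exact Finset.measurable_sum _ fun σ _ => (measurable_kerTerm σ t x).const_mul _

theorem kerTerm_one {n : ℕ} (t : ℝ) (x x' : Fin n → ℝ) :
    kerTerm 1 t x x' = ∏ j, gauss t (x' j - x j) := by
  simp [kerTerm, PhiIter_zero]

/-- An unnormalised product Gaussian kernel centred at `a`. -/
noncomputable def prodGauss {n : ℕ} (c s : ℝ) (a x' : Fin n → ℝ) : ℝ :=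
  ∏ j, (s⁻¹ * Real.exp (-c * ((x' j - a j) / s) ^ 2))

theorem prodGauss_nonneg {n : ℕ} (c : ℝ) {s : ℝ} (hs : 0 < s) (a x' : Fin n → ℝ) :
    0 ≤ prodGauss c s a x' :=
  Finset.prod_nonneg fun _ _ => by positivity

theorem integrable_prodGauss {n : ℕ} {c s : ℝ} (hc : 0 < c) (hs : 0 < s) (a : Fin n → ℝ) :
    Integrable (prodGauss c s a) := by
  unfold prodGauss
  refine Integrable.fintype_prod (f := fun j z => s⁻¹ * Real.exp (-c * ((z - a j) / s) ^ 2))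
    fun j => Integrable.const_mul ?_ _
  exact ((integrable_exp_neg_mul_sq hc).comp_div hs.ne').comp_sub_right (a j)

theorem integral_prodGauss {n : ℕ} (c : ℝ) {s : ℝ} (hs : 0 < s) (a : Fin n → ℝ) :
    ∫ x', prodGauss c s a x' = Real.sqrt (Real.pi / c) ^ n := by
  unfold prodGauss
  rw [integral_fintype_prod_volume_eq_prod
    (fun j z => s⁻¹ * Real.exp (-c * ((z - a j) / s) ^ 2))]
  have h : ∀ j : Fin n, ∫ z, s⁻¹ * Real.exp (-c * ((z - a j) / s) ^ 2)
      = Real.sqrt (Real.pi / c) := fun j => by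
    rw [integral_const_mul,
      integral_sub_right_eq_self (fun z => Real.exp (-c * (z / s) ^ 2)) (a j),
      Measure.integral_comp_div (fun z => Real.exp (-c * z ^ 2)) s, integral_gaussian,
      abs_of_pos hs, smul_eq_mul, inv_mul_cancel_left₀ hs.ne']
  rw [Finset.prod_congr rfl fun j _ => h j, Fin.prod_const]

theorem kerTerm_one_eq_prodGauss {n : ℕ} {s : ℝ} (hs : 0 < s) (x x' : Fin n → ℝ) :
    kerTerm 1 (s ^ 2) x x' = (Real.sqrt (2 * Real.pi))⁻¹ ^ n * prodGauss (1 / 2) s x x' := by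
  rw [kerTerm_one, prodGauss, ← Fin.prod_const n (Real.sqrt (2 * Real.pi))⁻¹, ← Finset.prod_mul_distrib]
  refine Finset.prod_congr rfl fun j _ => ?_
  rw [gauss_scaling hs, gauss, mul_one, mul_one, mul_left_comm]
  congr 3
  ring

theorem integrable_kerTerm_one {n : ℕ} {s : ℝ} (hs : 0 < s) (x : Fin n → ℝ) :
    Integrable (kerTerm 1 (s ^ 2) x) := by
  rw [show kerTerm 1 (s ^ 2) x = _ from funext (kerTerm_one_eq_prodGauss hs x)]
  exact (integrable_prodGauss (by norm_num) hs x).const_mul _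

theorem integral_kerTerm_one {n : ℕ} {s : ℝ} (hs : 0 < s) (x : Fin n → ℝ) :
    ∫ x', kerTerm 1 (s ^ 2) x x' = 1 := by
  simp_rw [kerTerm_one_eq_prodGauss hs x, integral_const_mul, integral_prodGauss _ hs]
  rw [← mul_pow, show Real.pi / (1 / 2) = 2 * Real.pi by ring, inv_mul_cancel₀, one_pow]
  positivity

theorem abs_kerTerm_one_le {n : ℕ} {s : ℝ} (hs : 0 < s) (x x' : Fin n → ℝ) :
    |kerTerm 1 (s ^ 2) x x'| ≤ prodGauss (kerRate n) s x x' := by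
  rw [kerTerm_one, Finset.abs_prod, prodGauss]
  refine Finset.prod_le_prod (fun _ _ => abs_nonneg _) fun j _ => ?_
  rw [abs_of_nonneg (gauss_nonneg _ _), gauss_scaling hs]
  gcongr
  refine (gauss_one_le _).trans (Real.exp_le_exp.2 ?_)
  have : kerRate n ≤ 1 / 2 := by
    unfold kerRate
    rw [div_le_div_iff₀ (by positivity) (by norm_num)]
    have : (0 : ℝ) ≤ n := by positivity
    linarith
  nlinarith [sq_nonneg ((x' j - x j) / s)]

/-- A quadratic factor is absorbed by halving the rate of a product Gaussian. -/
theorem prodGauss_mul_le {n : ℕ} {c s ε L : ℝ} (hc : 0 < c) (hs : 0 < s) (hε : 0 ≤ ε)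
    (hL : 0 ≤ L) (a x' : Fin n → ℝ) :
    prodGauss c s a x' * (ε + L * ∑ j, (x' j - a j) ^ 2) ≤
      (1 + 2 / c) * (ε + L * s ^ 2) * prodGauss (c / 2) s a x' := by
  set Q := ∑ j, ((x' j - a j) / s) ^ 2 with hQ
  have hQ0 : 0 ≤ Q := Finset.sum_nonneg fun _ _ => sq_nonneg _
  have h1 : ∑ j, (x' j - a j) ^ 2 = s ^ 2 * Q := by
    rw [hQ, Finset.mul_sum]
    refine Finset.sum_congr rfl fun j _ => ?_
    field_simp
  have h2 : prodGauss c s a x' = prodGauss (c / 2) s a x' * Real.exp (-(c / 2 * Q)) := by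
    rw [hQ, Finset.mul_sum, ← Finset.sum_neg_distrib, Real.exp_sum, prodGauss, prodGauss,
      ← Finset.prod_mul_distrib]
    refine Finset.prod_congr rfl fun j _ => ?_
    rw [mul_assoc, ← Real.exp_add]
    congr 2
    ring
  have h3 : Real.exp (-(c / 2 * Q)) ≤ 1 := Real.exp_le_one_iff.2 (by
    have := mul_nonneg hc.le hQ0
    linarith)
  have h4 : Real.exp (-(c / 2 * Q)) * Q ≤ 2 / c := by
    rw [Real.exp_neg, inv_mul_le_iff₀ (Real.exp_pos _)]
    have := Real.add_one_le_exp (c / 2 * Q)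
    calc Q = (c / 2 * Q) * (2 / c) := by field_simp
      _ ≤ _ := by gcongr; linarith
  rw [h1, h2, mul_assoc, mul_comm _ (prodGauss (c / 2) s a x')]
  refine mul_le_mul_of_nonneg_left ?_ (prodGauss_nonneg _ hs _ _)
  have h5 : 0 ≤ 2 / c := by positivity
  calc Real.exp (-(c / 2 * Q)) * (ε + L * (s ^ 2 * Q))
      = Real.exp (-(c / 2 * Q)) * ε + L * s ^ 2 * (Real.exp (-(c / 2 * Q)) * Q) := by ring
    _ ≤ 1 * ε + L * s ^ 2 * (2 / c) := by gcongr
    _ ≤ (1 + 2 / c) * (ε + L * s ^ 2) := by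
        have : 0 ≤ L * s ^ 2 := by positivity
        nlinarith [mul_nonneg h5 hε]

theorem eq_zero_comp_perm {n : ℕ} {F : (Fin n → ℝ) → ℝ} (hF : ∀ z, ¬ StrictMono z → F z = 0)
    {x' : Fin n → ℝ} (hx' : Monotone x') {τ : Equiv.Perm (Fin n)} (hτ : τ ≠ 1) :
    F (x' ∘ τ) = 0 := by
  refine hF _ fun h => hτ ?_
  have hinj : Function.Injective x' := (Function.Injective.of_comp_iff' x' τ.bijective).1 h.injective
  have hm : StrictMono x' := hx'.strictMono_of_injective hinj
  have hτm : StrictMono τ := fun i j hij => hm.lt_iff_lt.1 (h hij)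
  have : τ.toFun = id := by
    have := hτm.range_inj (strictMono_id)
    refine this.1 ?_
    simp [τ.surjective.range_eq]
  ext i
  exact congrArg Fin.val (congrFun this i)

theorem abs_rKer_mul_sub_le {n : ℕ} {C : ℝ} (hC : 1 ≤ C) {s : ℝ} (hs : 0 < s)
    {F : (Fin n → ℝ) → ℝ} (hF : ∀ z, ¬ StrictMono z → F z = 0)
    {x : Fin n → ℝ} (hx : Monotone x)
    (hker : ∀ (σ : Equiv.Perm (Fin n)) (x' : Fin n → ℝ), Monotone x' →
      |kerTerm σ (s ^ 2) x x'| ≤ C * prodGauss (kerRate n) s (x ∘ σ) x')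
    {ε L : ℝ} (hε : 0 ≤ ε) (hL : 0 ≤ L) (hmod : ∀ z, |F z - F x| ≤ ε + L * ‖z - x‖ ^ 2)
    (x' : Fin n → ℝ) :
    |rKer n (s ^ 2) x x' * F x' - kerTerm 1 (s ^ 2) x x' * F x| ≤
      ∑ σ : Equiv.Perm (Fin n), 2 * C * (prodGauss (kerRate n) s (x ∘ σ) x' *
        (ε + L * ∑ j, (x' j - (x ∘ σ) j) ^ 2)) := by
  have hS : ∀ σ : Equiv.Perm (Fin n), 0 ≤ ∑ j, (x' j - (x ∘ σ) j) ^ 2 := fun σ =>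
    Finset.sum_nonneg fun _ _ => sq_nonneg _
  have hg : ∀ σ : Equiv.Perm (Fin n), 0 ≤ prodGauss (kerRate n) s (x ∘ σ) x' := fun σ =>
    prodGauss_nonneg _ hs _ _
  have hnn : ∀ σ : Equiv.Perm (Fin n), 0 ≤ prodGauss (kerRate n) s (x ∘ σ) x' *
      (ε + L * ∑ j, (x' j - (x ∘ σ) j) ^ 2) := fun σ => by
    have := hS σ; have := hg σ; positivity
  have hone : |kerTerm 1 (s ^ 2) x x' * (F x' - F x)| ≤
      2 * C * (prodGauss (kerRate n) s (x ∘ (1 : Equiv.Perm (Fin n))) x' *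
        (ε + L * ∑ j, (x' j - (x ∘ (1 : Equiv.Perm (Fin n))) j) ^ 2)) := by
    rw [abs_mul]
    refine le_trans ?_ (le_mul_of_one_le_left (hnn 1) (by linarith))
    have h1 : ‖x' - x‖ ^ 2 ≤ ∑ j, (x' j - (x ∘ (1 : Equiv.Perm (Fin n))) j) ^ 2 :=
      norm_comp_perm_symm_sub_sq_le x x' 1
    refine mul_le_mul (abs_kerTerm_one_le hs x x') ((hmod x').trans ?_) (abs_nonneg _) (hg 1)
    gcongr
  by_cases hx' : Monotone x'
  · have e : rKer n (s ^ 2) x x' * F x' - kerTerm 1 (s ^ 2) x x' * F x =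
        ∑ σ : Equiv.Perm (Fin n), (((Equiv.Perm.sign σ : ℤ) : ℝ) * kerTerm σ (s ^ 2) x x' * F x' -
          if σ = 1 then kerTerm 1 (s ^ 2) x x' * F x else 0) := by
      rw [rKer_eq_sum, Finset.sum_mul, Finset.sum_sub_distrib, Finset.sum_ite_eq' Finset.univ]
      simp
    rw [e]
    refine (Finset.abs_sum_le_sum_abs _ _).trans (Finset.sum_le_sum fun σ _ => ?_)
    by_cases hσ : σ = 1
    · subst hσ
      rw [if_pos rfl, Equiv.Perm.sign_one, Units.val_one, Int.cast_one, one_mul, ← mul_sub]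
      exact hone
    · have h0 : F (x' ∘ σ.symm) = 0 := eq_zero_comp_perm hF hx' (fun h => hσ (by
        rw [← Equiv.symm_symm σ, h]; rfl))
      have h1 := hmod x'
      have h2 := hmod (x' ∘ σ.symm)
      have h3 : |F x'| ≤ 2 * (ε + L * ∑ j, (x' j - (x ∘ σ) j) ^ 2) := by
        have h4 := mul_le_mul_of_nonneg_left (norm_sub_sq_le_sum_sub_perm_sq hx hx' σ) hL
        have h5 := mul_le_mul_of_nonneg_left (norm_comp_perm_symm_sub_sq_le x x' σ) hL
        simp only [Function.comp_apply]
        rw [h0] at h2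
        rw [abs_le] at h1 h2 ⊢
        constructor <;> linarith
      have hsign : |((Equiv.Perm.sign σ : ℤ) : ℝ)| = 1 := by
        rcases Int.units_eq_one_or (Equiv.Perm.sign σ) with h | h <;> simp [h]
      rw [if_neg hσ, sub_zero, abs_mul, abs_mul, hsign, one_mul]
      calc _ ≤ C * prodGauss (kerRate n) s (x ∘ σ) x' *
            (2 * (ε + L * ∑ j, (x' j - (x ∘ σ) j) ^ 2)) :=
            mul_le_mul (hker σ x' hx') h3 (abs_nonneg _) (mul_nonneg (by linarith) (hg σ))
        _ = _ := by ring
  · have h0 : F x' = 0 := hF _ fun h => hx' h.monotone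
    have e : rKer n (s ^ 2) x x' * F x' - kerTerm 1 (s ^ 2) x x' * F x =
        kerTerm 1 (s ^ 2) x x' * (F x' - F x) := by rw [h0]; ring
    rw [e]
    exact hone.trans (Finset.single_le_sum
      (f := fun σ : Equiv.Perm (Fin n) => 2 * C * (prodGauss (kerRate n) s (x ∘ σ) x' *
        (ε + L * ∑ j, (x' j - (x ∘ σ) j) ^ 2)))
      (fun σ _ => mul_nonneg (by linarith) (hnn σ)) (Finset.mem_univ 1))

/-- Quantitative convergence: the modulus of continuity at `x` controls the error. -/
theorem exists_integral_rKer_sub_le (n : ℕ) :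
    ∃ A : ℝ, 0 < A ∧ ∀ F : (Fin n → ℝ) → ℝ, Measurable F → (∀ z, ¬ StrictMono z → F z = 0) →
      ∀ s : ℝ, 0 < s → ∀ x, Monotone x → ∀ ε L : ℝ, 0 ≤ ε → 0 ≤ L →
      (∀ z, |F z - F x| ≤ ε + L * ‖z - x‖ ^ 2) →
      Integrable (fun x' => rKer n (s ^ 2) x x' * F x') ∧
      |(∫ x', rKer n (s ^ 2) x x' * F x') - F x| ≤ A * (ε + L * s ^ 2) := by
  obtain ⟨C, hC, hker⟩ := exists_abs_prod_PhiIter_le n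
  have hr := kerRate_pos n
  set Z := Real.sqrt (Real.pi / (kerRate n / 2)) ^ n
  have hZ : 0 < Z := by have := Real.pi_pos; positivity
  set D := 2 * C * (1 + 2 / kerRate n) with hD
  have hDpos : 0 < D := by positivity
  refine ⟨∑ _σ : Equiv.Perm (Fin n), D * Z, Finset.sum_pos (fun _ _ => by positivity)
    ⟨1, Finset.mem_univ 1⟩, fun F hFm hF s hs x hx ε L hε hL hmod => ?_⟩
  set b : (Fin n → ℝ) → ℝ := fun x' => ∑ σ : Equiv.Perm (Fin n),
    D * (ε + L * s ^ 2) * prodGauss (kerRate n / 2) s (x ∘ σ) x' with hb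
  have hbint : Integrable b := integrable_finsetSum _ fun σ _ =>
    (integrable_prodGauss (by positivity) hs _).const_mul _
  have hle : ∀ x', ‖rKer n (s ^ 2) x x' * F x' - kerTerm 1 (s ^ 2) x x' * F x‖ ≤ b x' := by
    intro x'
    refine (abs_rKer_mul_sub_le hC hs hF hx (fun σ x' hx' => hker σ s hs x x' hx hx') hε hL hmod
      x').trans (Finset.sum_le_sum fun σ _ => ?_)
    calc _ ≤ 2 * C * ((1 + 2 / kerRate n) * (ε + L * s ^ 2) *
          prodGauss (kerRate n / 2) s (x ∘ σ) x') :=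
          mul_le_mul_of_nonneg_left (prodGauss_mul_le hr hs hε hL _ _) (by linarith)
      _ = _ := by rw [hD]; ring
  have hone : Integrable fun x' => kerTerm 1 (s ^ 2) x x' * F x :=
    (integrable_kerTerm_one hs x).mul_const _
  have hdiff : Integrable fun x' =>
      rKer n (s ^ 2) x x' * F x' - kerTerm 1 (s ^ 2) x x' * F x :=
    hbint.mono' (((measurable_rKer n _ x).mul hFm).sub
      ((measurable_kerTerm 1 _ x).mul_const _)).aestronglyMeasurable (Filter.Eventually.of_forall hle)
  have hint : Integrable fun x' => rKer n (s ^ 2) x x' * F x' := by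
    refine (hdiff.add hone).congr (Filter.Eventually.of_forall fun x' => ?_)
    simp
  refine ⟨hint, ?_⟩
  have e : (∫ x', rKer n (s ^ 2) x x' * F x') - F x =
      ∫ x', (rKer n (s ^ 2) x x' * F x' - kerTerm 1 (s ^ 2) x x' * F x) := by
    rw [integral_sub hint hone, integral_mul_const, integral_kerTerm_one hs, one_mul]
  rw [e, ← Real.norm_eq_abs]
  refine (norm_integral_le_of_norm_le hbint (Filter.Eventually.of_forall hle)).trans (le_of_eq ?_)
  rw [hb, integral_finsetSum _ fun σ _ =>
    (integrable_prodGauss (by positivity) hs _).const_mul _, Finset.sum_mul]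
  refine Finset.sum_congr rfl fun σ _ => ?_
  rw [integral_const_mul, integral_prodGauss _ hs]
  ring

theorem isClosed_Wcham (n : ℕ) : IsClosed (Wcham n) :=
  isClosed_monotone

theorem mem_frontier_Wcham_of_not_strictMono {n : ℕ} {x : Fin n → ℝ} (hx : x ∈ Wcham n)
    (h : ¬ StrictMono x) : x ∈ frontier (Wcham n) := by
  rw [(isClosed_Wcham n).frontier_eq]
  refine ⟨hx, fun hint => ?_⟩
  obtain ⟨i, j, hij, hle⟩ : ∃ i j, i < j ∧ x j ≤ x i := by
    simpa [StrictMono] using h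
  have hcont : Continuous fun r : ℝ => Function.update x j (x j - r) := by fun_prop
  have hev : ∀ᶠ r in nhdsWithin (0 : ℝ) (Ioi 0), Function.update x j (x j - r) ∈ Wcham n := by
    refine (hcont.tendsto 0).mono_left nhdsWithin_le_nhds ?_
    simpa using mem_interior_iff_mem_nhds.1 hint
  obtain ⟨r, hr, hr0⟩ := (hev.and self_mem_nhdsWithin).exists
  have h1 := hr hij.le
  have hr0 : 0 < r := hr0
  rw [Function.update_self, Function.update_of_ne hij.ne] at h1
  linarith

theorem tendstoUniformlyOn_integral_rKer {n : ℕ} {F : (Fin n → ℝ) → ℝ} (hFm : Measurable F)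
    (hF : ∀ z, ¬ StrictMono z → F z = 0) {B : ℝ} (hB : ∀ z, |F z| ≤ B) {S : Set (Fin n → ℝ)}
    (hS : S ⊆ Wcham n)
    (hmod : ∀ ε > 0, ∃ δ > 0, ∀ x ∈ S, ∀ z, dist x z < δ → dist (F x) (F z) < ε) :
    TendstoUniformlyOn (fun (t : ℝ) (x : Fin n → ℝ) => ∫ x', rKer n t x x' * F x') F
      (nhdsWithin (0 : ℝ) (Ioi 0)) S := by
  obtain ⟨A, hA, h⟩ := exists_integral_rKer_sub_le n
  have hB0 : 0 ≤ B := (abs_nonneg _).trans (hB 0)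
  rw [Metric.tendstoUniformlyOn_iff]
  intro e he
  obtain ⟨δ, hδ, hmod⟩ := hmod (e / (2 * A)) (by positivity)
  set L := 2 * B / δ ^ 2 with hL
  have hL0 : 0 ≤ L := by positivity
  have hlt : (0 : ℝ) < e / (2 * A * (L + 1)) := by positivity
  filter_upwards [Ioo_mem_nhdsGT hlt] with t ht x hx
  have hq : ∀ z, |F z - F x| ≤ e / (2 * A) + L * ‖z - x‖ ^ 2 := fun z => by
    rw [← dist_eq_norm, dist_comm, ← Real.dist_eq, dist_comm (F z)]
    rcases lt_or_ge (dist x z) δ with hz | hz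
    · have := hmod x hx z hz
      have : 0 ≤ L * dist x z ^ 2 := by positivity
      linarith
    · have h1 : dist (F x) (F z) ≤ 2 * B := by
        rw [Real.dist_eq]
        linarith [abs_sub (F x) (F z), hB x, hB z]
      have h2 : 2 * B ≤ L * dist x z ^ 2 := by
        calc 2 * B = L * δ ^ 2 := by rw [hL]; field_simp
          _ ≤ _ := by gcongr
      have : 0 < e / (2 * A) := by positivity
      linarith
  have h1 := (h F hFm hF (Real.sqrt t) (Real.sqrt_pos.2 ht.1) x (hS hx) _ L (by positivity) hL0
    hq).2
  rw [Real.sq_sqrt ht.1.le] at h1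
  rw [dist_comm, Real.dist_eq]
  refine h1.trans_lt ?_
  have h2 : L * t < e / (2 * A) := by
    calc L * t ≤ (L + 1) * t := by nlinarith [ht.1]
      _ < (L + 1) * (e / (2 * A * (L + 1))) := by
        have := ht.2
        gcongr
      _ = _ := by field_simp
  calc A * (e / (2 * A) + L * t) < A * (e / (2 * A) + e / (2 * A)) := by gcongr
    _ = e := by field_simp; ring

/-- Let `f` be bounded and continuous on `W^n` and zero on a neighbourhood of the boundary of
`W^n`. Then `∫_{W^n} r_t(x,x') f(x') dx'` is an absolutely convergent integral, which tends to
`f(x)` as `t ↓ 0` uniformly on compact subsets of `W^n`, and uniformly over all of `W^n` if `f`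
is uniformly continuous. Only the values of `f` on `W^n` matter. -/
theorem stmt13 (n : ℕ) (hn : 1 ≤ n) (f : (Fin n → ℝ) → ℝ)
    (hf_cont : ContinuousOn f (Wcham n))
    (hf_bdd : ∃ C : ℝ, ∀ x ∈ Wcham n, |f x| ≤ C)
    (hf_bdry : ∃ U : Set (Fin n → ℝ),
      IsOpen U ∧ frontier (Wcham n) ⊆ U ∧ ∀ x ∈ U ∩ Wcham n, f x = 0) :
    (∀ t : ℝ, 0 < t → ∀ x ∈ Wcham n,
      MeasureTheory.IntegrableOn (fun x' => rKer n t x x' * f x') (Wcham n)) ∧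
    (∀ K : Set (Fin n → ℝ), IsCompact K → K ⊆ Wcham n →
      TendstoUniformlyOn
        (fun (t : ℝ) (x : Fin n → ℝ) => ∫ x' in Wcham n, rKer n t x x' * f x')
        f (nhdsWithin (0 : ℝ) (Set.Ioi 0)) K) ∧
    (UniformContinuousOn f (Wcham n) →
      TendstoUniformlyOn
        (fun (t : ℝ) (x : Fin n → ℝ) => ∫ x' in Wcham n, rKer n t x x' * f x')
        f (nhdsWithin (0 : ℝ) (Set.Ioi 0)) (Wcham n)) := by
  obtain ⟨U, -, hU, hfU⟩ := hf_bdry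
  obtain ⟨C, hC⟩ := hf_bdd
  have hW := isClosed_Wcham n
  set F := (Wcham n).indicator f with hFdef
  have hfront : ∀ x ∈ frontier (Wcham n), f x = 0 := fun x hx =>
    hfU x ⟨hU hx, hW.frontier_subset hx⟩
  have hFc : Continuous F := continuous_indicator hfront (by rwa [hW.closure_eq])
  have hF : ∀ z, ¬ StrictMono z → F z = 0 := fun z hz => by
    by_cases hzW : z ∈ Wcham n
    · rw [hFdef, Set.indicator_of_mem hzW]
      exact hfront z (mem_frontier_Wcham_of_not_strictMono hzW hz)
    · exact Set.indicator_of_notMem hzW f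
  have hFW : ∀ x ∈ Wcham n, F x = f x := fun x hx => Set.indicator_of_mem hx f
  have hB : ∀ z, |F z| ≤ |C| := fun z => by
    by_cases hzW : z ∈ Wcham n
    · rw [hFW z hzW]; exact (hC z hzW).trans (le_abs_self C)
    · rw [hFdef, Set.indicator_of_notMem hzW, abs_zero]; exact abs_nonneg C
  have hind : ∀ t x, (fun x' => rKer n t x x' * F x') =
      (Wcham n).indicator (fun x' => rKer n t x x' * f x') := fun t x => by
    funext x'
    by_cases hx' : x' ∈ Wcham n <;> simp [hFdef, hx']
  have hint : ∀ t x, ∫ x' in Wcham n, rKer n t x x' * f x' = ∫ x', rKer n t x x' * F x' :=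
    fun t x => by rw [hind, integral_indicator hW.measurableSet]
  have hconv : ∀ S ⊆ Wcham n,
      (∀ ε > 0, ∃ δ > 0, ∀ x ∈ S, ∀ z, dist x z < δ → dist (F x) (F z) < ε) →
      TendstoUniformlyOn (fun (t : ℝ) (x : Fin n → ℝ) => ∫ x' in Wcham n, rKer n t x x' * f x')
        f (nhdsWithin (0 : ℝ) (Set.Ioi 0)) S := fun S hS hmod => by
    simp_rw [hint]
    exact (tendstoUniformlyOn_integral_rKer hFc.measurable hF hB hS hmod).congr_right
      fun x hx => hFW x (hS hx)
  refine ⟨fun t ht x hx => ?_, fun K hK hKW => hconv K hKW fun ε hε => ?_,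
    fun huc => hconv _ subset_rfl fun ε hε => ?_⟩
  · obtain ⟨A, -, h⟩ := exists_integral_rKer_sub_le n
    have h1 := (h F hFc.measurable hF (Real.sqrt t) (Real.sqrt_pos.2 ht) x hx (2 * |C|) 0
      (by positivity) le_rfl fun z => by
        rw [zero_mul, add_zero]; linarith [abs_sub (F z) (F x), hB x, hB z]).1
    rwa [Real.sq_sqrt ht.le, hind, integrable_indicator_iff hW.measurableSet] at h1
  · obtain ⟨δ, hδ, h⟩ := Metric.mem_uniformity_dist.1
      (hK.uniformContinuousAt_of_continuousAt F (fun a _ => hFc.continuousAt)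
        (Metric.dist_mem_uniformity hε))
    exact ⟨δ, hδ, fun x hx z hz => h hz hx⟩
  · obtain ⟨δ, hδ, h⟩ := Metric.uniformContinuousOn_iff.1 huc ε hε
    refine ⟨δ, hδ, fun x hx z hz => ?_⟩
    rw [hFW x hx]
    by_cases hzW : z ∈ Wcham n
    · rw [hFW z hzW]
      exact h x hx z hzW hz
    · obtain ⟨w, hw, hxw⟩ := exists_mem_frontier_infDist_compl_eq_dist hx
        (fun hu => hzW (hu ▸ Set.mem_univ z))
      have h1 := h x hx w (hW.frontier_subset hw)
        ((hxw ▸ Metric.infDist_le_dist_of_mem (Set.mem_compl hzW)).trans_lt hz)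
      rwa [hfront w hw, ← Set.indicator_of_notMem hzW f] at h1
end
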